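/- arXiv:1205.5301 — 8 statements merged into one kernel-verified Lean document; each statement's English description precedes it below -/
import Mathlib

section
/- Let D be a positive squarefree integer and let m, n be coprime positive integers with D n² ≤ 3 m² and m² ≤ 3 D n². Set e = 0 if 2 ∣ D or if both mn and D+1 are even, and e = 1 otherwise, and set g = 2^e · gcd(m, D). Then g divides each of |m² − D n²|, 2mn, and m² + D n², and the nonnegative integers p = |m² − D n²|/g, r = 2mn/g, q = (m² + D n²)/g satisfy p² + D r² = q², gcd(p, q) = 1, and 2p ≤ q. -/
/-!
The number `g` is the greatest common divisor of `m² - D n²` and `m² + D n²`. Indeed, put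
`d = gcd(m, D)`, `m = d a`, `D = d b`; then `m² = d x` and `D n² = d y` with `x = d a²` and
`y = b n²`. As `D` is squarefree, `m` is coprime to `b n`, so `x ∣ m²` and `y ∣ (b n)²` are coprime.
The gcd is therefore `d · gcd(x - y, x + y)`, where the last factor is `2` if `x` and `y` are both
odd and `1` otherwise, and `x y` has the parity of `m n D`.
-/

theorem even_add_iff_odd_mul_of_isCoprime {x y : ℤ} (h : IsCoprime x y) :
    Even (x + y) ↔ Odd (x * y) := by
  have not_both_even : ¬(Even x ∧ Even y) := fun ⟨hx, hy⟩ ↦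
    Int.prime_two.not_isUnit (h.isUnit_of_dvd' hx.two_dvd hy.two_dvd)
  rw [Int.even_add, Int.odd_mul, ← Int.not_even_iff_odd, ← Int.not_even_iff_odd]
  tauto

theorem int_gcd_two_left (z : ℤ) : Int.gcd 2 z = if Even z then 2 else 1 := by
  split_ifs with hz
  · exact Int.gcd_eq_natAbs_left hz.two_dvd
  · exact Int.isCoprime_iff_gcd_eq_one.mp (Int.isCoprime_two_left.mpr (Int.not_even_iff_odd.mp hz))

theorem int_gcd_sub_add_of_isCoprime {x y : ℤ} (h : IsCoprime x y) :
    Int.gcd (x - y) (x + y) = if Odd (x * y) then 2 else 1 := by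
  have hx : Int.gcd x (x + y) = 1 := by
    rw [Int.gcd_self_add_right, Int.isCoprime_iff_gcd_eq_one.mp h]
  calc Int.gcd (x - y) (x + y) = Int.gcd (x * 2) (x + y) := by
        rw [show x * 2 = x - y + (x + y) by ring, Int.gcd_add_self_left]
    _ = Int.gcd 2 (x + y) := Int.gcd_mul_right_left_of_gcd_eq_one hx
    _ = if Odd (x * y) then 2 else 1 := by
        simp only [int_gcd_two_left, even_add_iff_odd_mul_of_isCoprime h]

theorem int_gcd_sq_sub_mul_sq_sq_add_mul_sq {d a b n : ℤ} (h : IsCoprime (d * a) (b * n)) :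
    Int.gcd ((d * a) ^ 2 - d * b * n ^ 2) ((d * a) ^ 2 + d * b * n ^ 2) =
      (if Odd (d * a * n * (d * b)) then 2 else 1) * d.natAbs := by
  have hxy : IsCoprime (d * a ^ 2) (b * n ^ 2) :=
    IsCoprime.mono ⟨d, by ring⟩ ⟨b, by ring⟩ (h.pow (m := 2) (n := 2))
  have parity : Odd (d * a ^ 2 * (b * n ^ 2)) ↔ Odd (d * a * n * (d * b)) := by
    simp only [Int.odd_mul, Int.odd_pow' two_ne_zero]
    tauto
  calc Int.gcd ((d * a) ^ 2 - d * b * n ^ 2) ((d * a) ^ 2 + d * b * n ^ 2)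
      = Int.gcd ((d * a ^ 2 - b * n ^ 2) * d) ((d * a ^ 2 + b * n ^ 2) * d) := by ring_nf
    _ = Int.gcd (d * a ^ 2 - b * n ^ 2) (d * a ^ 2 + b * n ^ 2) * d.natAbs := Int.gcd_mul_right ..
    _ = (if Odd (d * a * n * (d * b)) then 2 else 1) * d.natAbs := by
        simp only [int_gcd_sub_add_of_isCoprime hxy, parity]

theorem gcd_ne_zero_of_coprime_div {m D : ℕ} (h : Nat.Coprime m (D / Nat.gcd m D)) :
    Nat.gcd m D ≠ 0 := by
  intro h0
  simp [Nat.gcd_eq_zero_iff.mp h0] at h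

theorem gcd_natAbs_sq_sub_mul_sq {D m n : ℕ} (hmn : Nat.Coprime m n)
    (hmD : Nat.Coprime m (D / Nat.gcd m D)) :
    Nat.gcd ((m ^ 2 : ℤ) - D * n ^ 2).natAbs (m ^ 2 + D * n ^ 2) =
      (if Odd (m * n * D) then 2 else 1) * Nat.gcd m D := by
  obtain ⟨a, ha⟩ := Nat.gcd_dvd_left m D
  obtain ⟨b, hb⟩ := Nat.gcd_dvd_right m D
  have gcd_ne_zero : Nat.gcd m D ≠ 0 := gcd_ne_zero_of_coprime_div hmD
  rw [Nat.div_eq_of_eq_mul_right gcd_ne_zero.bot_lt hb] at hmD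
  generalize Nat.gcd m D = d at *
  subst ha hb
  have coprime : IsCoprime ((d : ℤ) * a) (b * n) := by
    exact_mod_cast Nat.isCoprime_iff_coprime.mpr (hmD.mul_right hmn)
  have int_gcd_eq := int_gcd_sq_sub_mul_sq_sq_add_mul_sq coprime
  rw [Int.natAbs_natCast] at int_gcd_eq
  rw [← Int.natAbs_natCast ((d * a) ^ 2 + d * b * n ^ 2), ← Int.gcd_eq_natAbs_gcd_natAbs]
  simp only [← Int.odd_coe_nat]
  push_cast
  exact int_gcd_eq

theorem sq_div_add_mul_sq_div {D p r q g : ℕ} (hp : g ∣ p) (hr : g ∣ r) (hq : g ∣ q)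
    (h : p ^ 2 + D * r ^ 2 = q ^ 2) : (p / g) ^ 2 + D * (r / g) ^ 2 = (q / g) ^ 2 := by
  rw [Nat.div_pow hp, Nat.div_pow hr, Nat.div_pow hq, ← h,
    Nat.add_div_of_dvd_right (pow_dvd_pow_of_dvd hp 2),
    Nat.mul_div_assoc D (pow_dvd_pow_of_dvd hr 2)]

theorem natAbs_sq_sub_sq_add_mul_sq (D m n : ℕ) :
    ((m ^ 2 : ℤ) - D * n ^ 2).natAbs ^ 2 + D * (2 * m * n) ^ 2 = (m ^ 2 + D * n ^ 2) ^ 2 := by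
  zify
  rw [sq_abs]
  ring

theorem two_mul_natAbs_sub_le_add {x y : ℕ} (hyx : y ≤ 3 * x) (hxy : x ≤ 3 * y) :
    2 * ((x : ℤ) - y).natAbs ≤ x + y := by
  omega

theorem two_dvd_or_two_dvd_and_iff_not_odd_mul {D k : ℕ} :
    2 ∣ D ∨ (2 ∣ k ∧ 2 ∣ D + 1) ↔ ¬Odd (k * D) := by
  rw [Nat.odd_mul, Nat.odd_iff, Nat.odd_iff]
  omega

theorem stmt0_general (D m n : ℕ) (hmn : Nat.gcd m n = 1)
    (hmD : Nat.Coprime m (D / Nat.gcd m D))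
    (h1 : D * n ^ 2 ≤ 3 * m ^ 2) (h2 : m ^ 2 ≤ 3 * (D * n ^ 2))
    (e : ℕ)
    (he : e = if 2 ∣ D ∨ (2 ∣ m * n ∧ 2 ∣ D + 1) then 0 else 1)
    (g : ℕ) (hg : g = 2 ^ e * Nat.gcd m D) :
    g ∣ ((m ^ 2 : ℤ) - D * n ^ 2).natAbs ∧ g ∣ 2 * m * n ∧ g ∣ m ^ 2 + D * n ^ 2 ∧
    (((m ^ 2 : ℤ) - D * n ^ 2).natAbs / g) ^ 2 + D * (2 * m * n / g) ^ 2
      = ((m ^ 2 + D * n ^ 2) / g) ^ 2 ∧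
    Nat.gcd (((m ^ 2 : ℤ) - D * n ^ 2).natAbs / g) ((m ^ 2 + D * n ^ 2) / g) = 1 ∧
    2 * (((m ^ 2 : ℤ) - D * n ^ 2).natAbs / g) ≤ (m ^ 2 + D * n ^ 2) / g := by
  have two_pow_e : 2 ^ e = if Odd (m * n * D) then 2 else 1 := by
    simp only [he, two_dvd_or_two_dvd_and_iff_not_odd_mul, ite_not]
    split_ifs <;> rfl
  have g_eq_gcd : g = Nat.gcd ((m ^ 2 : ℤ) - D * n ^ 2).natAbs (m ^ 2 + D * n ^ 2) := by
    rw [gcd_natAbs_sq_sub_mul_sq hmn hmD, hg, two_pow_e]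
  have g_pos : 0 < g := hg ▸ Nat.mul_pos (by positivity) (gcd_ne_zero_of_coprime_div hmD).bot_lt
  have hp : g ∣ ((m ^ 2 : ℤ) - D * n ^ 2).natAbs := g_eq_gcd ▸ Nat.gcd_dvd_left ..
  have hq : g ∣ m ^ 2 + D * n ^ 2 := g_eq_gcd ▸ Nat.gcd_dvd_right ..
  have hr : g ∣ 2 * m * n := by
    have two_pow_e_dvd : 2 ^ e ∣ 2 := by rw [two_pow_e]; split_ifs <;> norm_num
    exact hg ▸ (mul_dvd_mul two_pow_e_dvd (Nat.gcd_dvd_left m D)).mul_right n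
  refine ⟨hp, hr, hq, sq_div_add_mul_sq_div hp hr hq (natAbs_sq_sub_sq_add_mul_sq D m n), ?_, ?_⟩
  · rw [g_eq_gcd]
    exact Nat.coprime_div_gcd_div_gcd (g_eq_gcd ▸ g_pos)
  · rw [← Nat.mul_div_assoc 2 hp]
    exact Nat.div_le_div_right (by exact_mod_cast two_mul_natAbs_sub_le_add h1 h2)

/-- Forward direction of the parameterization (Lemma 1.3): the formulas in
`m, n` produce a solution `(p, r, q)` of `p² + D r² = q²` with `gcd(p,q) = 1`
and `2p ≤ q`. -/
theorem stmt0 (D m n : ℕ) (hD : 0 < D) (hDsf : Squarefree D)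
    (hm : 0 < m) (hn : 0 < n) (hmn : Nat.gcd m n = 1)
    (h1 : D * n ^ 2 ≤ 3 * m ^ 2) (h2 : m ^ 2 ≤ 3 * (D * n ^ 2))
    (e : ℕ)
    (he : e = if 2 ∣ D ∨ (2 ∣ m * n ∧ 2 ∣ D + 1) then 0 else 1)
    (g : ℕ) (hg : g = 2 ^ e * Nat.gcd m D) :
    g ∣ ((m ^ 2 : ℤ) - D * n ^ 2).natAbs ∧ g ∣ 2 * m * n ∧ g ∣ m ^ 2 + D * n ^ 2 ∧
    (((m ^ 2 : ℤ) - D * n ^ 2).natAbs / g) ^ 2 + D * (2 * m * n / g) ^ 2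
      = ((m ^ 2 + D * n ^ 2) / g) ^ 2 ∧
    Nat.gcd (((m ^ 2 : ℤ) - D * n ^ 2).natAbs / g) ((m ^ 2 + D * n ^ 2) / g) = 1 ∧
    2 * (((m ^ 2 : ℤ) - D * n ^ 2).natAbs / g) ≤ (m ^ 2 + D * n ^ 2) / g :=
  stmt0_general D m n hmn
    (Nat.gcd_comm D m ▸ (Nat.coprime_div_gcd_of_squarefree hDsf hm.ne').symm) h1 h2 e he g hg
end

section
/- Let p, r, q be positive integers and D a positive squarefree integer satisfying p² + D r² = q², gcd(p, q) = 1, and 2p ≤ q. Then there exist coprime positive integers m, n with D n² ≤ 3 m² and m² ≤ 3 D n² such that p = |m² − D n²|/g, r = 2mn/g, and q = (m² + D n²)/g, where g = 2^e · gcd(m, D) and e = 0 if 2 ∣ D or if both mn and D+1 are even, and e = 1 otherwise. -/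
/-!
Reduce `(p + q) / r` to lowest terms `m / n`. Since `D r² = (q - p)(q + p)`, both
`(m² + D n²) r = 2mnq` and `(m² - D n²) r = 2mnp` hold, so `r ∣ 2mn` by coprimality of `p` and `q`,
and the quotient `g` is the common factor to be removed. It satisfies
`gcd(m, D) ∣ g ∣ 2 gcd(m, D)`. If `g = gcd(m, D)`, then `D`, `m`, `n` cannot all be odd, as `p` and
`q` would be even. If `g = 2 gcd(m, D)`, then `r` is odd, and if moreover `D` were even, then
`p` and `q` would be odd and `8` would divide `q² - p² = D r²`, hence `D`.
-/

/-- The solution `(p, r, q)` of `p² + D r² = q²` arises from the parameters `m, n` after removal of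
the common factor `g`: `p = (m² - D n²) / g`, `r = 2mn / g`, `q = (m² + D n²) / g`. The formulas are
free of division and subtraction, and the sign is fixed by `D n² ≤ m²`. -/
structure IsPellParam (D m n g p r q : ℕ) : Prop where
  sq_eq : m ^ 2 = D * n ^ 2 + g * p
  two_mul_mul_eq : 2 * m * n = g * r
  sq_add_eq : m ^ 2 + D * n ^ 2 = g * q

theorem even_mul_iff_two_dvd_or (a b : ℕ) : Even (a * b) ↔ 2 ∣ a ∨ (2 ∣ b ∧ 2 ∣ a + 1) := by
  rw [Nat.even_mul, even_iff_two_dvd, even_iff_two_dvd]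
  omega

theorem not_even_and_even_of_coprime {a b : ℕ} (h : a.Coprime b) : ¬ (Even a ∧ Even b) :=
  fun ⟨ha, hb⟩ => Nat.not_coprime_of_dvd_of_dvd one_lt_two ha.two_dvd hb.two_dvd h

theorem pos_of_sq_add_mul_sq_eq {D p r q : ℕ} (heq : p ^ 2 + D * r ^ 2 = q ^ 2)
    (hpq : p.Coprime q) (hhalf : 2 * p ≤ q) : 0 < r := by
  rcases r.eq_zero_or_pos with rfl | hr
  · obtain rfl : p = q := by simpa using heq
    obtain rfl : p = 0 := by omega
    simp at hpq
  · exact hr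

theorem eight_dvd_of_sq_add_mul_sq_eq {D p r q : ℕ} (heq : p ^ 2 + D * r ^ 2 = q ^ 2)
    (hpq : p.Coprime q) (hr : Odd r) (hD : Even D) : 8 ∣ D := by
  have hparity : Even p ↔ Even q := by
    simpa [hD, parity_simps] using congrArg Even heq
  have hp : Odd p := by
    by_contra hp
    rw [Nat.not_odd_iff_even] at hp
    exact not_even_and_even_of_coprime hpq ⟨hp, hparity.1 hp⟩
  have hq : Odd q := by
    rwa [← Nat.not_even_iff_odd, ← hparity, Nat.not_even_iff_odd]
  have hdvd : 8 ∣ D * r ^ 2 := by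
    have hsub : D * r ^ 2 = (q ^ 2 - 1) - (p ^ 2 - 1) := by
      have hp1 : 1 ≤ p ^ 2 := Nat.one_le_pow _ _ hp.pos
      omega
    rw [hsub]
    exact Nat.dvd_sub (Nat.eight_dvd_sq_sub_one_of_odd hq) (Nat.eight_dvd_sq_sub_one_of_odd hp)
  have hcop : Nat.Coprime 8 (r ^ 2) := Nat.Coprime.pow 3 2 (Nat.coprime_two_left.2 hr)
  exact hcop.dvd_of_dvd_mul_right hdvd

theorem exists_isPellParam {D p r q : ℕ} (heq : p ^ 2 + D * r ^ 2 = q ^ 2)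
    (hpq : p.Coprime q) (hr : 0 < r) :
    ∃ m n g : ℕ, 0 < m ∧ 0 < n ∧ m.Coprime n ∧ IsPellParam D m n g p r q := by
  have hpleq : p ≤ q := (Nat.pow_le_pow_iff_left two_ne_zero).1 (heq ▸ Nat.le_add_right _ _)
  obtain ⟨s, rfl⟩ := Nat.exists_eq_add_of_le hpleq
  obtain ⟨d, m, n, hd, hmn, hm, hn⟩ :=
    Nat.exists_coprime' (m := p + (p + s)) (n := r) (Nat.gcd_pos_of_pos_right _ hr)
  have hn0 : 0 < n := Nat.pos_of_mul_pos_right (hn ▸ hr)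
  have hm0 : 0 < m := by
    refine Nat.pos_of_ne_zero ?_
    rintro rfl
    obtain ⟨rfl, rfl⟩ : p = 0 ∧ s = 0 := by omega
    simp at hpq
  have hplus : m * r = n * (p + (p + s)) := by rw [hm, hn]; ring
  have hminus : D * n * r = m * s := by
    refine Nat.eq_of_mul_eq_mul_left hd ?_
    calc d * (D * n * r) = D * r * (n * d) := by ring
      _ = D * r ^ 2 := by rw [← hn]; ring
      _ = (p + (p + s)) * s := by linarith
      _ = d * (m * s) := by rw [hm]; ring
  have hq : (m ^ 2 + D * n ^ 2) * r = 2 * m * n * (p + s) := by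
    linear_combination m * hplus + n * hminus
  have hp : m ^ 2 * r = D * n ^ 2 * r + 2 * m * n * p := by
    linear_combination m * hplus - n * hminus
  obtain ⟨g, hg⟩ : r ∣ 2 * m * n := by
    have hrp : r ∣ 2 * m * n * p :=
      (Nat.dvd_add_right (dvd_mul_left r _)).1 (hp ▸ dvd_mul_left r _)
    have hrq : r ∣ 2 * m * n * (p + s) := hq ▸ dvd_mul_left r _
    simpa only [Nat.gcd_mul_left, hpq.gcd_eq_one, mul_one] using Nat.dvd_gcd hrp hrq
  refine ⟨m, n, g, hm0, hn0, hmn, ?_, by rw [hg, mul_comm], ?_⟩ <;>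
    refine Nat.eq_of_mul_eq_mul_right hr ?_
  · rw [hp, hg]; ring
  · rw [hq, hg]; ring

namespace IsPellParam

variable {D m n g p r q : ℕ}

theorem sq_add_mul_sq_eq (h : IsPellParam D m n g p r q) (hg : 0 < g) :
    p ^ 2 + D * r ^ 2 = q ^ 2 := by
  refine Nat.eq_of_mul_eq_mul_left (pow_pos hg 2) ?_
  calc g ^ 2 * (p ^ 2 + D * r ^ 2) = (g * p) ^ 2 + D * (g * r) ^ 2 := by ring
    _ = (g * p) ^ 2 + 4 * (D * n ^ 2) * m ^ 2 := by rw [← h.two_mul_mul_eq]; ring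
    _ = (m ^ 2 + D * n ^ 2) ^ 2 := by rw [h.sq_eq]; ring
    _ = g ^ 2 * q ^ 2 := by rw [h.sq_add_eq]; ring

theorem natAbs_sub_eq (h : IsPellParam D m n g p r q) :
    ((m ^ 2 : ℤ) - D * n ^ 2).natAbs = g * p := by
  have hsq : (m ^ 2 : ℤ) = D * n ^ 2 + (g * p : ℕ) := mod_cast h.sq_eq
  rw [hsq, add_sub_cancel_left, Int.natAbs_natCast]

theorem mul_sq_le_sq (h : IsPellParam D m n g p r q) : D * n ^ 2 ≤ m ^ 2 :=
  h.sq_eq ▸ Nat.le_add_right _ _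

theorem sq_le_three_mul (h : IsPellParam D m n g p r q) (hhalf : 2 * p ≤ q) :
    m ^ 2 ≤ 3 * (D * n ^ 2) := by
  have hg : g * (2 * p) ≤ g * q := Nat.mul_le_mul_left g hhalf
  linarith [h.sq_eq, h.sq_add_eq]

theorem gcd_dvd (h : IsPellParam D m n g p r q) (hpq : p.Coprime q) : m.gcd D ∣ g := by
  have hm : m.gcd D ∣ m ^ 2 := (Nat.gcd_dvd_left m D).trans (dvd_pow_self m two_ne_zero)
  have hD : m.gcd D ∣ D * n ^ 2 := (Nat.gcd_dvd_right m D).mul_right _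
  have hp : m.gcd D ∣ g * p := (Nat.dvd_add_right hD).1 (h.sq_eq ▸ hm)
  have hq : m.gcd D ∣ g * q := h.sq_add_eq ▸ dvd_add hm hD
  simpa only [Nat.gcd_mul_left, hpq.gcd_eq_one, mul_one] using Nat.dvd_gcd hp hq

theorem dvd_two_mul_gcd (h : IsPellParam D m n g p r q) (hmn : m.Coprime n) :
    g ∣ 2 * m.gcd D := by
  have hmm : g ∣ 2 * m * m := ⟨p + q, by linarith [h.sq_eq, h.sq_add_eq]⟩
  have hmn' : g ∣ 2 * m * n := ⟨r, h.two_mul_mul_eq⟩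
  have hm : g ∣ 2 * m := by
    simpa only [Nat.gcd_mul_left, hmn.gcd_eq_one, mul_one] using Nat.dvd_gcd hmm hmn'
  have hDn : g ∣ 2 * D * n ^ 2 :=
    (Nat.dvd_add_right (dvd_mul_right g p)).1 ⟨q, by linarith [h.sq_eq, h.sq_add_eq]⟩
  have hDm : g ∣ 2 * D * m := by
    rw [mul_right_comm]
    exact hm.mul_right D
  have hD : g ∣ 2 * D := by
    simpa only [Nat.gcd_mul_left, (hmn.pow_right 2).gcd_eq_one, mul_one] using
      Nat.dvd_gcd hDm hDn
  simpa only [Nat.gcd_mul_left] using Nat.dvd_gcd hm hD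

theorem eq_gcd_or_eq_two_mul_gcd (h : IsPellParam D m n g p r q) (hmn : m.Coprime n)
    (hpq : p.Coprime q) (hm : 0 < m) : g = m.gcd D ∨ g = 2 * m.gcd D := by
  obtain ⟨c, rfl⟩ := h.gcd_dvd hpq
  have hc : c ∣ 2 := by
    refine Nat.dvd_of_mul_dvd_mul_left (Nat.gcd_pos_of_pos_left D hm) ?_
    rw [mul_comm _ 2]
    exact h.dvd_two_mul_gcd hmn
  rcases (Nat.dvd_prime Nat.prime_two).1 hc with rfl | rfl
  · exact .inl (mul_one _)
  · exact .inr (mul_comm _ _)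

theorem even_mul_of_odd (h : IsPellParam D m n g p r q) (hpq : p.Coprime q) (hg : Odd g) :
    Even (D * (m * n)) := by
  by_contra hodd
  simp only [Nat.not_even_iff_odd, Nat.odd_mul] at hodd
  obtain ⟨hD, hm, hn⟩ := hodd
  have hq : Even (g * q) := h.sq_add_eq ▸ hm.pow.add_odd (hD.mul hn.pow)
  have hp : Even (g * p) := by
    have hsum : Odd (D * n ^ 2 + g * p) := h.sq_eq ▸ hm.pow
    exact (Nat.odd_add.1 hsum).1 (hD.mul hn.pow)
  rw [Nat.even_mul, or_iff_right (Nat.not_even_iff_odd.2 hg)] at hp hq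
  exact not_even_and_even_of_coprime hpq ⟨hp, hq⟩

theorem even_mul_of_eq_gcd (h : IsPellParam D m n (m.gcd D) p r q) (hpq : p.Coprime q) :
    Even (D * (m * n)) := by
  rcases D.even_or_odd with hD | hD
  · exact hD.mul_right _
  · exact h.even_mul_of_odd hpq (hD.of_dvd_nat (Nat.gcd_dvd_right m D))

theorem mul_eq_gcd_mul (h : IsPellParam D m n (2 * m.gcd D) p r q) : m * n = m.gcd D * r :=
  Nat.eq_of_mul_eq_mul_left two_pos (by linarith [h.two_mul_mul_eq])

theorem odd_of_eq_two_mul_gcd (h : IsPellParam D m n (2 * m.gcd D) p r q) (hmn : m.Coprime n)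
    (hm : 0 < m) : Odd r := by
  have hgcd : 0 < m.gcd D := Nat.gcd_pos_of_pos_left D hm
  have hmul := h.mul_eq_gcd_mul
  obtain ⟨hsq, -, hadd⟩ := h
  obtain ⟨m', k, hcop, hm', hk⟩ := Nat.exists_coprime m D
  generalize m.gcd D = d at *
  subst hm' hk
  have hr : r = m' * n := Nat.eq_of_mul_eq_mul_left hgcd (by linarith)
  have hplus : m' ^ 2 * d = p + q :=
    Nat.eq_of_mul_eq_mul_left (mul_pos two_pos hgcd) (by linarith)
  have hminus : q = p + k * n ^ 2 :=
    Nat.eq_of_mul_eq_mul_left (mul_pos two_pos hgcd) (by linarith)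
  have hparity : Even (m' ^ 2 * d) ↔ Even (k * n ^ 2) := by
    rw [hplus, hminus, ← add_assoc, Nat.even_add]
    simp
  have hkm : ¬ (Even m' ∧ Even k) := not_even_and_even_of_coprime hcop
  have hmn₂ : ¬ (Even (m' * d) ∧ Even n) := not_even_and_even_of_coprime hmn
  rw [hr, ← Nat.not_even_iff_odd]
  simp only [Nat.even_mul, Nat.even_pow' two_ne_zero] at hparity hmn₂ ⊢
  rintro (hm₂ | hn₂)
  · rcases hparity.1 (.inl hm₂) with hk₂ | hn₂
    · exact hkm ⟨hm₂, hk₂⟩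
    · exact hmn₂ ⟨.inl hm₂, hn₂⟩
  · exact hmn₂ ⟨hparity.2 (.inr hn₂), hn₂⟩

theorem odd_mul_of_eq_two_mul_gcd (h : IsPellParam D m n (2 * m.gcd D) p r q)
    (hmn : m.Coprime n) (hpq : p.Coprime q) (hm : 0 < m) (hD : ¬ 8 ∣ D) : Odd (D * (m * n)) := by
  have heq := h.sq_add_mul_sq_eq (mul_pos two_pos (Nat.gcd_pos_of_pos_left D hm))
  have hr : Odd r := h.odd_of_eq_two_mul_gcd hmn hm
  have hDodd : Odd D := by
    by_contra hDeven
    exact hD (eight_dvd_of_sq_add_mul_sq_eq heq hpq hr (Nat.not_odd_iff_even.1 hDeven))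
  rw [h.mul_eq_gcd_mul]
  exact hDodd.mul ((hDodd.of_dvd_nat (Nat.gcd_dvd_right m D)).mul hr)

theorem eq_two_pow_mul_gcd (h : IsPellParam D m n g p r q) (hmn : m.Coprime n)
    (hpq : p.Coprime q) (hm : 0 < m) (hD : ¬ 8 ∣ D) :
    g = 2 ^ (if 2 ∣ D ∨ (2 ∣ m * n ∧ 2 ∣ D + 1) then 0 else 1) * m.gcd D := by
  simp only [← even_mul_iff_two_dvd_or]
  rcases h.eq_gcd_or_eq_two_mul_gcd hmn hpq hm with rfl | rfl
  · rw [if_pos (h.even_mul_of_eq_gcd hpq), pow_zero, one_mul]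
  · rw [if_neg (Nat.not_even_iff_odd.2 (h.odd_mul_of_eq_two_mul_gcd hmn hpq hm hD)), pow_one]

end IsPellParam

theorem not_eight_dvd_of_squarefree {D : ℕ} (hD : Squarefree D) : ¬ 8 ∣ D := fun h =>
  Nat.prime_two.not_isUnit (hD 2 ((by decide : 2 * 2 ∣ 8).trans h))

theorem stmt1_general {p r q D : ℕ} (hD : ¬ 8 ∣ D) (heq : p ^ 2 + D * r ^ 2 = q ^ 2)
    (hgcd : Nat.gcd p q = 1) (hhalf : 2 * p ≤ q) :
    ∃ m n : ℕ, 0 < m ∧ 0 < n ∧ Nat.gcd m n = 1 ∧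
      D * n ^ 2 ≤ 3 * m ^ 2 ∧ m ^ 2 ≤ 3 * (D * n ^ 2) ∧
      ∃ e g : ℕ,
        e = (if 2 ∣ D ∨ (2 ∣ m * n ∧ 2 ∣ D + 1) then 0 else 1) ∧
        g = 2 ^ e * Nat.gcd m D ∧
        ((m ^ 2 : ℤ) - D * n ^ 2).natAbs = g * p ∧
        2 * m * n = g * r ∧
        m ^ 2 + D * n ^ 2 = g * q := by
  have hr : 0 < r := pos_of_sq_add_mul_sq_eq heq hgcd hhalf
  obtain ⟨m, n, g, hm, hn, hmn, h⟩ := exists_isPellParam heq hgcd hr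
  have hlower : D * n ^ 2 ≤ 3 * m ^ 2 := h.mul_sq_le_sq.trans (Nat.le_mul_of_pos_left _ three_pos)
  exact ⟨m, n, hm, hn, hmn, hlower, h.sq_le_three_mul hhalf, _, g, rfl,
    h.eq_two_pow_mul_gcd hmn hgcd hm hD, h.natAbs_sub_eq, h.two_mul_mul_eq, h.sq_add_eq⟩

/-- Converse direction of the parameterization (Lemma 1.3): every solution
`(p, r, q)` of `p² + D r² = q²` with `gcd(p,q) = 1` and `2p ≤ q` arises from
coprime positive integers `m, n` via the stated formulas. -/
theorem stmt1 (p r q D : ℕ) (hp : 0 < p) (hr : 0 < r) (hq : 0 < q) (hD : 0 < D)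
    (hDsf : Squarefree D) (heq : p ^ 2 + D * r ^ 2 = q ^ 2)
    (hgcd : Nat.gcd p q = 1) (hhalf : 2 * p ≤ q) :
    ∃ m n : ℕ, 0 < m ∧ 0 < n ∧ Nat.gcd m n = 1 ∧
      D * n ^ 2 ≤ 3 * m ^ 2 ∧ m ^ 2 ≤ 3 * (D * n ^ 2) ∧
      ∃ e g : ℕ,
        e = (if 2 ∣ D ∨ (2 ∣ m * n ∧ 2 ∣ D + 1) then 0 else 1) ∧
        g = 2 ^ e * Nat.gcd m D ∧
        ((m ^ 2 : ℤ) - D * n ^ 2).natAbs = g * p ∧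
        2 * m * n = g * r ∧
        m ^ 2 + D * n ^ 2 = g * q :=
  stmt1_general (not_eight_dvd_of_squarefree hDsf) heq hgcd hhalf
end

section
/- Let D be a positive squarefree integer and let m, n be coprime positive integers. Then gcd(|m² − D n²|, m² + D n²) = 2^e · gcd(m, D), where e = 0 if 2 ∣ D or if both mn and D+1 are even, and e = 1 otherwise. -/
/-!
Write `g = gcd(m, D)`, `m = k g` and `D = d g`. Then `m² ± D n² = g (a ± b)` with `a = g k²` and
`b = d n²`. As `D` is squarefree and `m` is coprime to `n`, the integers `a` and `b` are coprime.
Hence `gcd(a - b, a + b)` divides `2`, and it equals `2` exactly when `a b` is odd, which happens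
exactly when `D` and `m n` are both odd.
-/

theorem isCoprime_mul_add {R : Type*} [CommRing R] {a b : R} (h : IsCoprime a b) :
    IsCoprime (a * b) (a + b) := by
  have ha : IsCoprime a (a + b) := by simpa [add_comm] using h.add_mul_left_right 1
  have hb : IsCoprime b (a + b) := by simpa using h.symm.add_mul_left_right 1
  exact ha.mul_left hb

theorem gcd_sub_add_dvd_two_mul_gcd (a b : ℤ) : Int.gcd (a - b) (a + b) ∣ 2 * Int.gcd a b := by
  set t := Int.gcd (a - b) (a + b)
  have hsub : (t : ℤ) ∣ a - b := Int.gcd_dvd_left ..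
  have hadd : (t : ℤ) ∣ a + b := Int.gcd_dvd_right ..
  have ha : (t : ℤ) ∣ 2 * a := by simpa [two_mul] using dvd_add hadd hsub
  have hb : (t : ℤ) ∣ 2 * b := by simpa [two_mul] using dvd_sub hadd hsub
  simpa [Int.gcd_mul_left] using Int.dvd_gcd ha hb

theorem gcd_sub_add_of_isCoprime {a b : ℤ} (h : IsCoprime a b) :
    Int.gcd (a - b) (a + b) = 2 ^ (if 2 ∣ a * b then 0 else 1) := by
  have hdvd : Int.gcd (a - b) (a + b) ∣ 2 := by
    simpa only [Int.isCoprime_iff_gcd_eq_one.mp h, mul_one] using gcd_sub_add_dvd_two_mul_gcd a b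
  split_ifs with hab
  · refine ((Nat.dvd_prime Nat.prime_two).mp hdvd).resolve_right fun htwo ↦ ?_
    have hadd : 2 ∣ a + b := by simpa [htwo] using Int.gcd_dvd_right (a - b) (a + b)
    exact Int.prime_two.not_isUnit ((isCoprime_mul_add h).isUnit_of_dvd' hab hadd)
  · obtain ⟨ha, hb⟩ : Odd a ∧ Odd b := by
      rwa [← Int.odd_mul, ← Int.not_even_iff_odd, even_iff_two_dvd]
    exact Nat.dvd_antisymm hdvd (Int.dvd_gcd (ha.sub_odd hb).two_dvd (ha.add_odd hb).two_dvd)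

theorem two_dvd_or_two_dvd_and_two_dvd_add_one_iff (D x : ℤ) :
    2 ∣ D ∨ (2 ∣ x ∧ 2 ∣ D + 1) ↔ 2 ∣ D * x := by
  rw [Int.prime_two.dvd_mul]
  have hD : 2 ∣ D ∨ 2 ∣ D + 1 := by lia
  tauto

theorem exists_eq_mul_gcd_isCoprime_of_squarefree {D m n : ℤ} (hD : Squarefree D)
    (hmn : IsCoprime m n) :
    ∃ k d : ℤ, m = k * Int.gcd m D ∧ D = d * Int.gcd m D ∧
      IsCoprime (Int.gcd m D * k ^ 2) (d * n ^ 2) := by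
  obtain ⟨k, d, hkd, hm, hd⟩ := Int.exists_gcd_one (Int.gcd_pos_of_ne_zero_right m hD.ne_zero)
  refine ⟨k, d, hm, hd, ?_⟩
  set g : ℤ := (Int.gcd m D : ℤ)
  rw [hm] at hmn
  rw [hd] at hD
  have hgd : IsCoprime g d := (IsRelPrime.of_squarefree_mul hD).isCoprime.symm
  have hgn : IsCoprime g n := hmn.of_mul_left_right
  have hkn : IsCoprime k n := hmn.of_mul_left_left
  exact (hgd.mul_right hgn.pow_right).mul_left
    ((Int.isCoprime_iff_gcd_eq_one.mpr hkd).pow_left.mul_right hkn.pow)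

theorem stmt2_general {D m n : ℤ} (hD : Squarefree D) (hmn : IsCoprime m n) :
    Int.gcd (m ^ 2 - D * n ^ 2) (m ^ 2 + D * n ^ 2)
      = 2 ^ (if 2 ∣ D ∨ (2 ∣ m * n ∧ 2 ∣ D + 1) then 0 else 1) * Int.gcd m D := by
  obtain ⟨k, d, hm, hd, hcop⟩ := exists_eq_mul_gcd_isCoprime_of_squarefree hD hmn
  set g := Int.gcd m D
  have hsub : m ^ 2 - D * n ^ 2 = (g * k ^ 2 - d * n ^ 2) * g := by rw [hm, hd]; ring
  have hadd : m ^ 2 + D * n ^ 2 = (g * k ^ 2 + d * n ^ 2) * g := by rw [hm, hd]; ring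
  have hparity : 2 ∣ D * (m * n) ↔ 2 ∣ g * k ^ 2 * (d * n ^ 2) := by
    rw [hm, hd]
    simp only [Int.prime_two.dvd_mul, Int.prime_two.dvd_pow_iff_dvd two_ne_zero]
    tauto
  simp only [two_dvd_or_two_dvd_and_two_dvd_add_one_iff, hparity]
  rw [hsub, hadd, Int.gcd_mul_right, gcd_sub_add_of_isCoprime hcop, Int.natAbs_natCast]

/-- The gcd computation in the proof of Lemma 1.3:
`gcd(|m² − D n²|, m² + D n²) = 2^e · gcd(m, D)`. -/
theorem stmt2 (D m n : ℕ) (hD : 0 < D) (hDsf : Squarefree D)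
    (hm : 0 < m) (hn : 0 < n) (hmn : Nat.gcd m n = 1) :
    Nat.gcd ((m ^ 2 : ℤ) - D * n ^ 2).natAbs (m ^ 2 + D * n ^ 2)
      = 2 ^ (if 2 ∣ D ∨ (2 ∣ m * n ∧ 2 ∣ D + 1) then 0 else 1) * Nat.gcd m D := by
  exact_mod_cast stmt2_general (Int.squarefree_natCast.mpr hDsf) (Nat.isCoprime_iff_coprime.mpr hmn)
end

section
/- Let α, β, γ, δ be integers with β² ≠ 4αγ and δ ≠ 0, and suppose (a, b, c) is an integer solution of α x² + β x y + γ y² = δ z² with c ≠ 0. Then for every integer solution (x, y, z) of this equation with z ≠ 0 there exist integers m, n with gcd(m, n) = 1 and m ≥ 0, a rational number t, and a sign ε ∈ {1, −1}, such that x = t·(γ n (a n − 2 b m) − (α a + β b) m²), y = t·(α m (b m − 2 a n) − (γ b + β a) n²), and z = ε t · c (α m² + β m n + γ n²). Conversely, every such rational multiple with integer entries is a solution of the equation. -/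
/-! Geometrically, `(a, b, c)` is a point of a conic, and the other points are found on the lines
through it. In terms of the quadratic form `Q` on the left-hand side: if `Q u = Q v` and
`Q (u - v) ≠ 0`, then reflecting along `u - v` takes `v` to `u`, and any vector proportional to
`u - v` defines the same reflection. Apply this to `c (x, y)` and `ε z (a, b)`, on which `Q` takes
the same value `δ c² z²`: by the parallelogram law their difference is non-isotropic for one of the
two signs `ε`, and `(m, n)` is the primitive integer vector along it. -/

section Reflection

open QuadraticMap (polar)

section CommRing

variable {R M : Type*} [CommRing R] [AddCommGroup M] [Module R M] (Q : QuadraticForm R M)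

/-- The reflection of `v` in the hyperplane orthogonal to `w`, multiplied by `Q w` to clear the
denominator, so that it makes sense for every `w`. -/
def scaledReflection (w v : M) : M :=
  Q w • v - polar Q v w • w

theorem scaledReflection_smul_smul (k r : R) (w v : M) :
    scaledReflection Q (k • w) (r • v) = (k ^ 2 * r) • scaledReflection Q w v := by
  simp only [scaledReflection, QuadraticMap.map_smul, QuadraticMap.polar_smul_left,
    QuadraticMap.polar_smul_right, smul_eq_mul]
  module

theorem map_scaledReflection (w v : M) : Q (scaledReflection Q w v) = Q w ^ 2 * Q v := by
  rw [scaledReflection, sub_eq_add_neg, QuadraticMap.map_add Q]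
  simp only [QuadraticMap.map_neg, QuadraticMap.map_smul, QuadraticMap.polar_neg_right,
    QuadraticMap.polar_smul_left, QuadraticMap.polar_smul_right, smul_eq_mul]
  ring

theorem scaledReflection_sub_of_map_eq {u v : M} (h : Q u = Q v) :
    scaledReflection Q (u - v) v = Q (u - v) • u := by
  have h_polar : polar Q v (u - v) = -Q (u - v) := by
    rw [polar, add_sub_cancel, h]
    ring
  rw [scaledReflection, h_polar]
  module

theorem map_add_add_map_sub (u v : M) : Q (u + v) + Q (u - v) = 2 * (Q u + Q v) := by
  rw [sub_eq_add_neg, QuadraticMap.map_add Q u v, QuadraticMap.map_add Q u (-v),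
    QuadraticMap.map_neg, QuadraticMap.polar_neg_right]
  ring

theorem exists_sign_map_sub_smul_ne_zero [NoZeroDivisors R] [NeZero (2 : R)] {u v : M}
    (h : Q u = Q v) (hv : Q v ≠ 0) :
    ∃ ε : ℤ, (ε = 1 ∨ ε = -1) ∧ Q (u - (ε : R) • v) ≠ 0 := by
  by_contra! isotropic
  have h_sub : Q (u - v) = 0 := by simpa using isotropic 1 (.inl rfl)
  have h_add : Q (u + v) = 0 := by simpa using isotropic (-1) (.inr rfl)
  have h_four : (2 : R) * (2 * Q v) = 0 := by
    rw [two_mul (Q v)]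
    nth_rw 1 [← h]
    rw [← map_add_add_map_sub, h_add, h_sub, add_zero]
  exact mul_ne_zero two_ne_zero (mul_ne_zero two_ne_zero hv) h_four

theorem map_smul_scaledReflection {v : M} {δ c ε : R} (hv : Q v = δ * c ^ 2) (hε : ε ^ 2 = 1)
    (t : R) (w : M) : Q (t • scaledReflection Q w v) = δ * (ε * t * c * Q w) ^ 2 := by
  rw [QuadraticMap.map_smul, map_scaledReflection, hv, smul_eq_mul]
  linear_combination -δ * (t * c * Q w) ^ 2 * hε

end CommRing

variable {K V : Type*} [Field K] [AddCommGroup V] [Module K V] (Q : QuadraticForm K V)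

theorem eq_smul_scaledReflection_of_sub_eq_smul {u v w : V} {c s k : K} (hc : c ≠ 0) (hk : k ≠ 0)
    (hw : Q w ≠ 0) (h : Q (c • u) = Q (s • v)) (h_sub : c • u - s • v = k • w) :
    u = (s / (c * Q w)) • scaledReflection Q w v := by
  have reflect : (k ^ 2 * s) • scaledReflection Q w v = (k ^ 2 * (c * Q w)) • u := by
    rw [← scaledReflection_smul_smul, ← h_sub, scaledReflection_sub_of_map_eq Q h, h_sub,
      QuadraticMap.map_smul]
    module
  have cancel : s • scaledReflection Q w v = (c * Q w) • u :=
    smul_right_injective V (pow_ne_zero 2 hk) (by simpa only [mul_smul] using reflect)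
  rw [div_eq_inv_mul, mul_smul, cancel, inv_smul_smul₀ (mul_ne_zero hc hw)]

end Reflection

section BinaryForm

variable {R : Type*} [CommRing R]

/-- The binary quadratic form `α x² + β x y + γ y²`. -/
def binaryForm (α β γ : R) : QuadraticForm R (R × R) :=
  let x := LinearMap.fst R R R
  let y := LinearMap.snd R R R
  α • QuadraticMap.linMulLin x x + β • QuadraticMap.linMulLin x y + γ • QuadraticMap.linMulLin y y

theorem binaryForm_mk (α β γ x y : R) :
    binaryForm α β γ (x, y) = α * x ^ 2 + β * x * y + γ * y ^ 2 := by
  simp only [binaryForm, add_apply, smul_apply,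
    QuadraticMap.linMulLin_apply, LinearMap.fst_apply, LinearMap.snd_apply, smul_eq_mul]
  ring

theorem scaledReflection_binaryForm (α β γ m n a b : R) :
    scaledReflection (binaryForm α β γ) (m, n) (a, b) =
      (γ * n * (a * n - 2 * b * m) - (α * a + β * b) * m ^ 2,
        α * m * (b * m - 2 * a * n) - (γ * b + β * a) * n ^ 2) := by
  simp only [scaledReflection, QuadraticMap.polar, Prod.mk_add_mk, binaryForm_mk, Prod.smul_mk,
    Prod.mk_sub_mk, smul_eq_mul, Prod.mk.injEq]
  constructor <;> ring

end BinaryForm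

theorem exists_eq_mul_gcd_eq_one_nonneg {p q : ℤ} (h : (p, q) ≠ 0) :
    ∃ k m n : ℤ, p = k * m ∧ q = k * n ∧ Int.gcd m n = 1 ∧ 0 ≤ m := by
  have gcd_pos : 0 < Int.gcd p q := Int.gcd_pos_iff.2 (by simpa [imp_iff_not_or] using h)
  obtain ⟨m, n, coprime, hp, hq⟩ := Int.exists_gcd_one gcd_pos
  rcases le_total 0 m with hm | hm
  · exact ⟨Int.gcd p q, m, n, by rwa [mul_comm], by rwa [mul_comm], coprime, hm⟩
  · exact ⟨-Int.gcd p q, -m, -n, by rwa [neg_mul_neg, mul_comm], by rwa [neg_mul_neg, mul_comm],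
      by simpa using coprime, neg_nonneg.2 hm⟩

section Parametrization

variable {K : Type*} [Field K]

theorem exists_primitive_sub_eq_smul (Q : QuadraticForm K (K × K)) {p q : ℤ}
    (h : Q ((p : K), (q : K)) ≠ 0) :
    ∃ k m n : ℤ, ((p : K), (q : K)) = (k : K) • ((m : K), (n : K)) ∧ Int.gcd m n = 1 ∧ 0 ≤ m ∧
      (k : K) ≠ 0 ∧ Q ((m : K), (n : K)) ≠ 0 := by
  have ne_zero : (p, q) ≠ 0 := by
    rintro ⟨⟩
    exact h (by rw [Int.cast_zero, Prod.mk_zero_zero, QuadraticMap.map_zero])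
  obtain ⟨k, m, n, rfl, rfl, coprime, hm⟩ := exists_eq_mul_gcd_eq_one_nonneg ne_zero
  have eq_smul : (((k * m : ℤ) : K), ((k * n : ℤ) : K)) = (k : K) • ((m : K), (n : K)) := by simp
  rw [eq_smul, QuadraticMap.map_smul, smul_eq_mul] at h
  obtain ⟨hkk, hmn⟩ := mul_ne_zero_iff.1 h
  exact ⟨k, m, n, eq_smul, coprime, hm, left_ne_zero_of_mul hkk, hmn⟩

theorem exists_primitive_eq_smul_scaledReflection [NeZero (2 : K)] (Q : QuadraticForm K (K × K))
    {δ : K} {a b c x y z : ℤ} (hδ : δ ≠ 0) (hc : (c : K) ≠ 0) (hz : (z : K) ≠ 0)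
    (hab : Q ((a : K), (b : K)) = δ * c ^ 2) (hxy : Q ((x : K), (y : K)) = δ * z ^ 2) :
    ∃ (m n : ℤ) (t : K) (ε : ℤ), Int.gcd m n = 1 ∧ 0 ≤ m ∧ (ε = 1 ∨ ε = -1) ∧
      ((x : K), (y : K)) = t • scaledReflection Q ((m : K), (n : K)) ((a : K), (b : K)) ∧
      (z : K) = ε * t * c * Q ((m : K), (n : K)) := by
  set u : K × K := (x, y)
  set v : K × K := (a, b)
  have same_value : Q ((c : K) • u) = Q ((z : K) • v) := by
    rw [QuadraticMap.map_smul, QuadraticMap.map_smul, hab, hxy, smul_eq_mul, smul_eq_mul]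
    ring
  have value_ne_zero : Q ((z : K) • v) ≠ 0 := by
    rw [QuadraticMap.map_smul, hab, smul_eq_mul]
    positivity
  obtain ⟨ε, hε, nonisotropic⟩ := exists_sign_map_sub_smul_ne_zero Q same_value value_ne_zero
  have hε_sq : (ε : K) ^ 2 = 1 := by rcases hε with rfl | rfl <;> simp
  have integral : (c : K) • u - (ε : K) • (z : K) • v =
      (((c * x - ε * (z * a) : ℤ) : K), ((c * y - ε * (z * b) : ℤ) : K)) := by
    simp [u, v]
  rw [integral] at nonisotropic
  obtain ⟨k, m, n, h_sub, coprime, hm, hk, hmn⟩ := exists_primitive_sub_eq_smul Q nonisotropic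
  refine ⟨m, n, ε * z / (c * Q (m, n)), ε, coprime, hm, hε, ?_, ?_⟩
  · refine eq_smul_scaledReflection_of_sub_eq_smul Q hc hk hmn ?_ ?_
    · rw [same_value, mul_smul, QuadraticMap.map_smul Q (ε : K), ← sq, hε_sq, one_smul]
    · rw [mul_smul, integral, h_sub]
  · field_simp
    rw [hε_sq]

theorem stmt3_general [NeZero (2 : K)] (α β γ δ : K) (a b c : ℤ) (hδ : δ ≠ 0)
    (hc : (c : K) ≠ 0) (habc : α * a ^ 2 + β * a * b + γ * b ^ 2 = δ * c ^ 2) :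
    (∀ x y z : ℤ, α * x ^ 2 + β * x * y + γ * y ^ 2 = δ * z ^ 2 → (z : K) ≠ 0 →
      ∃ (m n : ℤ) (t : K) (ε : ℤ), Int.gcd m n = 1 ∧ 0 ≤ m ∧ (ε = 1 ∨ ε = -1) ∧
        (x : K) = t * (γ * n * (a * n - 2 * b * m) - (α * a + β * b) * m ^ 2) ∧
        (y : K) = t * (α * m * (b * m - 2 * a * n) - (γ * b + β * a) * n ^ 2) ∧
        (z : K) = ε * t * c * (α * m ^ 2 + β * m * n + γ * n ^ 2)) ∧
    (∀ (m n : ℤ) (t : K) (ε : ℤ) (x y z : ℤ), (ε = 1 ∨ ε = -1) →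
      (x : K) = t * (γ * n * (a * n - 2 * b * m) - (α * a + β * b) * m ^ 2) →
      (y : K) = t * (α * m * (b * m - 2 * a * n) - (γ * b + β * a) * n ^ 2) →
      (z : K) = ε * t * c * (α * m ^ 2 + β * m * n + γ * n ^ 2) →
      α * x ^ 2 + β * x * y + γ * y ^ 2 = δ * z ^ 2) := by
  rw [← binaryForm_mk] at habc
  constructor
  · intro x y z hxyz hz
    rw [← binaryForm_mk] at hxyz
    simpa only [scaledReflection_binaryForm, binaryForm_mk, Prod.smul_mk, Prod.mk.injEq,
      smul_eq_mul, and_assoc] using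
      exists_primitive_eq_smul_scaledReflection (binaryForm α β γ) hδ hc hz habc hxyz
  · intro m n t ε x y z hε hx hy hz
    have hε_sq : (ε : K) ^ 2 = 1 := by rcases hε with rfl | rfl <;> simp
    have hxy : ((x : K), (y : K)) =
        t • scaledReflection (binaryForm α β γ) ((m : K), (n : K)) ((a : K), (b : K)) := by
      rw [scaledReflection_binaryForm, Prod.smul_mk, smul_eq_mul, smul_eq_mul, hx, hy]
    rw [← binaryForm_mk, hxy, map_smul_scaledReflection _ habc hε_sq, binaryForm_mk, hz]

end Parametrization

/-- Lemma 2.1: given one integral solution `(a,b,c)` with `c ≠ 0` of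
`α x² + β x y + γ y² = δ z²`, every integral solution with `z ≠ 0` is a rational
multiple of the explicitly parameterized family, and conversely every such
rational multiple with integer entries is a solution. -/
theorem stmt3 (α β γ δ a b c : ℤ) (hdisc : β ^ 2 ≠ 4 * α * γ) (hδ : δ ≠ 0)
    (hc : c ≠ 0) (habc : α * a ^ 2 + β * a * b + γ * b ^ 2 = δ * c ^ 2) :
    (∀ x y z : ℤ, α * x ^ 2 + β * x * y + γ * y ^ 2 = δ * z ^ 2 → z ≠ 0 →
      ∃ (m n : ℤ) (t : ℚ) (ε : ℤ), Int.gcd m n = 1 ∧ 0 ≤ m ∧ (ε = 1 ∨ ε = -1) ∧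
        (x : ℚ) = t * ((γ : ℚ) * n * (a * n - 2 * b * m) - (α * a + β * b) * m ^ 2) ∧
        (y : ℚ) = t * ((α : ℚ) * m * (b * m - 2 * a * n) - (γ * b + β * a) * n ^ 2) ∧
        (z : ℚ) = (ε : ℚ) * t * c * ((α : ℚ) * m ^ 2 + β * m * n + γ * n ^ 2)) ∧
    (∀ (m n : ℤ) (t : ℚ) (ε : ℤ) (x y z : ℤ), Int.gcd m n = 1 → 0 ≤ m →
      (ε = 1 ∨ ε = -1) →
      (x : ℚ) = t * ((γ : ℚ) * n * (a * n - 2 * b * m) - (α * a + β * b) * m ^ 2) →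
      (y : ℚ) = t * ((α : ℚ) * m * (b * m - 2 * a * n) - (γ * b + β * a) * n ^ 2) →
      (z : ℚ) = (ε : ℚ) * t * c * ((α : ℚ) * m ^ 2 + β * m * n + γ * n ^ 2) →
      α * x ^ 2 + β * x * y + γ * y ^ 2 = δ * z ^ 2) := by
  have ⟨param, sol⟩ :=
    stmt3_general (K := ℚ) α β γ δ a b c (mod_cast hδ) (mod_cast hc) (mod_cast habc)
  exact ⟨mod_cast param, fun m n t ε x y z _ _ ↦ mod_cast sol m n t ε x y z⟩
end

section
/- Let p, r, q, D be integers with p ≥ 0, r, q, D ≥ 1, D squarefree, p² + D r² = q², gcd(p, q) = 1, and 2p ≤ q, and let Λ = Ω_D(p,q) be the planar lattice with basis vectors v = (q, 0) and w = (p, r√D). Then Λ is integral with ⟨v,v⟩ = ⟨w,w⟩ = q² and ⟨v,w⟩ = pq; its minimal norm is |Λ| = q², with v and w being linearly independent minimal vectors, so Λ is well-rounded; and det(Λ) = q r √D. Moreover, the rescaled lattice (1/√q)·Λ is also integral and well-rounded, with minimal norm q. -/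
/-- The standard inner product on the plane `ℝ × ℝ`. -/
def ip (v w : ℝ × ℝ) : ℝ := v.1 * w.1 + v.2 * w.2

/-- The planar lattice spanned by `v` and `w`. -/
def lat (v w : ℝ × ℝ) : Set (ℝ × ℝ) := {z | ∃ a b : ℤ, z = (a : ℝ) • v + (b : ℝ) • w}

/-- The set of squared lengths of nonzero vectors of the lattice spanned by `v, w`;
its least element is the minimal norm of the lattice. -/
def normSet (v w : ℝ × ℝ) : Set ℝ := {t | ∃ z ∈ lat v w, z ≠ 0 ∧ t = ip z z}

/-!
The basis `(v, w)` is Gauss-reduced: `2 |⟨v, w⟩| ≤ ⟨v, v⟩ ≤ ⟨w, w⟩`. For such a basis,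
`‖a v + b w‖² ≥ (a² - |a b| + b²) ‖v‖²`, and the integer `a² - |a b| + b²` is positive unless
`a = b = 0`, so `v` is a minimal vector. Being Gauss-reduced is invariant under rescaling.
-/

lemma ip_comm (x y : ℝ × ℝ) : ip x y = ip y x := by
  simp only [ip, mul_comm]

lemma ip_smul_add_smul_left (s t : ℝ) (x y z : ℝ × ℝ) :
    ip (s • x + t • y) z = s * ip x z + t * ip y z := by
  simp only [ip, Prod.fst_add, Prod.snd_add, Prod.smul_fst, Prod.smul_snd, smul_eq_mul]
  ring

lemma ip_smul_add_smul_self (s t : ℝ) (x y : ℝ × ℝ) :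
    ip (s • x + t • y) (s • x + t • y) =
      s ^ 2 * ip x x + 2 * (s * t) * ip x y + t ^ 2 * ip y y := by
  rw [ip_smul_add_smul_left, ip_comm x, ip_comm y, ip_smul_add_smul_left, ip_smul_add_smul_left,
    ip_comm y x]
  ring

lemma ip_smul_smul (c : ℝ) (x y : ℝ × ℝ) : ip (c • x) (c • y) = c ^ 2 * ip x y := by
  simp only [ip, Prod.smul_fst, Prod.smul_snd, smul_eq_mul]
  ring

lemma ip_inv_sqrt_smul_inv_sqrt_smul {q : ℝ} (hq : 0 ≤ q) (x y : ℝ × ℝ) :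
    ip ((√q)⁻¹ • x) ((√q)⁻¹ • y) = q⁻¹ * ip x y := by
  rw [ip_smul_smul, inv_pow, Real.sq_sqrt hq]

lemma ip_zero_left (x : ℝ × ℝ) : ip 0 x = 0 := by
  simp [ip]

lemma left_mem_lat (v w : ℝ × ℝ) : v ∈ lat v w := ⟨1, 0, by simp⟩

lemma right_mem_lat (v w : ℝ × ℝ) : w ∈ lat v w := ⟨0, 1, by simp⟩

lemma linearIndependent_of_ip_sq_lt {v w : ℝ × ℝ} (h : ip v w ^ 2 < ip v v * ip w w) :
    LinearIndependent ℝ ![v, w] := by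
  rw [LinearIndependent.pair_iff]
  intro s t hst
  have hv : s * ip v v + t * ip v w = 0 := by
    rw [ip_comm v w, ← ip_smul_add_smul_left, hst, ip_zero_left]
  have hw : s * ip v w + t * ip w w = 0 := by
    rw [← ip_smul_add_smul_left, hst, ip_zero_left]
  have hgram : ip v v * ip w w - ip v w ^ 2 ≠ 0 := (sub_pos.2 h).ne'
  constructor
  · refine (mul_eq_zero.1 ?_).resolve_right hgram
    linear_combination ip w w * hv - ip v w * hw
  · refine (mul_eq_zero.1 ?_).resolve_right hgram
    linear_combination ip v v * hw - ip v w * hv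

lemma sq_sub_abs_mul_add_sq_pos {R : Type*} [CommRing R] [LinearOrder R] [IsStrictOrderedRing R]
    {a b : R} (h : a ≠ 0 ∨ b ≠ 0) : 0 < a ^ 2 - |a * b| + b ^ 2 := by
  have hsum : 0 < a ^ 2 + b ^ 2 := by
    rcases h with ha | hb <;> positivity
  have hab : 2 * |a * b| ≤ a ^ 2 + b ^ 2 := by
    simpa only [abs_mul, sq_abs, mul_assoc] using two_mul_le_add_sq |a| |b|
  linarith

/-- A Gauss-reduced pair of plane vectors, i.e. the first vector is nonzero and no longer than the
second, and translating the second by the first does not shorten it. It is the notion of a reduced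
basis of a planar lattice; the sign of `ip v w` is left free. -/
structure IsGaussReduced (v w : ℝ × ℝ) : Prop where
  ip_self_pos : 0 < ip v v
  ip_self_le : ip v v ≤ ip w w
  two_mul_abs_ip_le : 2 * |ip v w| ≤ ip v v

namespace IsGaussReduced

variable {v w : ℝ × ℝ}

lemma smul (h : IsGaussReduced v w) {c : ℝ} (hc : c ≠ 0) : IsGaussReduced (c • v) (c • w) where
  ip_self_pos := by
    have := h.ip_self_pos
    rw [ip_smul_smul]
    positivity
  ip_self_le := by
    rw [ip_smul_smul, ip_smul_smul]
    exact mul_le_mul_of_nonneg_left h.ip_self_le (sq_nonneg c)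
  two_mul_abs_ip_le := by
    rw [ip_smul_smul, ip_smul_smul, abs_mul, abs_sq, mul_left_comm]
    exact mul_le_mul_of_nonneg_left h.two_mul_abs_ip_le (sq_nonneg c)

lemma linearIndependent (h : IsGaussReduced v w) : LinearIndependent ℝ ![v, w] := by
  refine linearIndependent_of_ip_sq_lt ?_
  have habs : |ip v w| < ip v v := by
    linarith [h.two_mul_abs_ip_le, h.ip_self_pos, abs_nonneg (ip v w)]
  calc ip v w ^ 2 < ip v v ^ 2 := sq_lt_sq' (abs_lt.1 habs).1 (abs_lt.1 habs).2
    _ = ip v v * ip v v := sq _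
    _ ≤ ip v v * ip w w := mul_le_mul_of_nonneg_left h.ip_self_le h.ip_self_pos.le

lemma mul_ip_self_le (h : IsGaussReduced v w) (s t : ℝ) :
    (s ^ 2 - |s * t| + t ^ 2) * ip v v ≤ ip (s • v + t • w) (s • v + t • w) := by
  have hcross : -(|s * t| * ip v v) ≤ 2 * (s * t) * ip v w := by
    calc -(|s * t| * ip v v) ≤ -(|s * t| * (2 * |ip v w|)) :=
          neg_le_neg (mul_le_mul_of_nonneg_left h.two_mul_abs_ip_le (abs_nonneg _))
      _ = -|2 * (s * t) * ip v w| := by rw [abs_mul (2 * (s * t)), abs_mul 2, abs_two]; ring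
      _ ≤ 2 * (s * t) * ip v w := neg_abs_le _
  have hsq : t ^ 2 * ip v v ≤ t ^ 2 * ip w w :=
    mul_le_mul_of_nonneg_left h.ip_self_le (sq_nonneg t)
  rw [ip_smul_add_smul_self]
  linarith

lemma isLeast_normSet (h : IsGaussReduced v w) : IsLeast (normSet v w) (ip v v) := by
  constructor
  · refine ⟨v, left_mem_lat v w, ?_, rfl⟩
    rintro rfl
    exact h.ip_self_pos.ne' (ip_zero_left 0)
  · rintro _ ⟨_, ⟨a, b, rfl⟩, hne, rfl⟩
    have hab : a ≠ 0 ∨ b ≠ 0 := by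
      by_contra! hzero
      simp [hzero] at hne
    have hone : (1 : ℝ) ≤ (a : ℝ) ^ 2 - |(a : ℝ) * b| + (b : ℝ) ^ 2 := by
      exact_mod_cast Int.add_one_le_of_lt (sq_sub_abs_mul_add_sq_pos hab)
    exact (le_mul_of_one_le_left h.ip_self_pos.le hone).trans (h.mul_ip_self_le a b)

end IsGaussReduced

theorem stmt6_general (p r q D : ℝ) (hr : 0 ≤ r) (hq : 0 < q) (hD : 0 ≤ D)
    (heq : p ^ 2 + D * r ^ 2 = q ^ 2) (hhalf : 2 * |p| ≤ q)
    (v w : ℝ × ℝ) (hv : v = (q, 0)) (hw : w = (p, r * √D)) :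
    ip v v = q ^ 2 ∧ ip w w = q ^ 2 ∧ ip v w = p * q ∧
    LinearIndependent ℝ ![v, w] ∧
    v ∈ lat v w ∧ w ∈ lat v w ∧
    IsLeast (normSet v w) (q ^ 2) ∧
    |v.1 * w.2 - w.1 * v.2| = q * r * √D ∧
    (∀ v' w' : ℝ × ℝ, v' = (√q)⁻¹ • v → w' = (√q)⁻¹ • w →
      ip v' v' = q ∧ ip w' w' = q ∧ ip v' w' = p ∧
      LinearIndependent ℝ ![v', w'] ∧
      IsLeast (normSet v' w') q) := by
  have hvv : ip v v = q ^ 2 := by simp [hv, ip, sq]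
  have hww : ip w w = q ^ 2 := by
    simp only [hw, ip]
    linear_combination heq + r ^ 2 * Real.sq_sqrt hD
  have hvw : ip v w = p * q := by simp [hv, hw, ip, mul_comm]
  have hred : IsGaussReduced v w :=
    { ip_self_pos := by rw [hvv]; positivity
      ip_self_le := (hvv.trans hww.symm).le
      two_mul_abs_ip_le := by
        rw [hvw, hvv, abs_mul, abs_of_pos hq, ← mul_assoc, sq]
        exact mul_le_mul_of_nonneg_right hhalf hq.le }
  have hdet : |v.1 * w.2 - w.1 * v.2| = q * r * √D := by
    rw [hv, hw, mul_zero, sub_zero, ← mul_assoc, abs_of_nonneg (by positivity)]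
  refine ⟨hvv, hww, hvw, hred.linearIndependent, left_mem_lat v w, right_mem_lat v w,
    hvv ▸ hred.isLeast_normSet, hdet, ?_⟩
  rintro _ _ rfl rfl
  have hred' := hred.smul (inv_ne_zero (Real.sqrt_pos.2 hq).ne')
  have hvv' : ip ((√q)⁻¹ • v) ((√q)⁻¹ • v) = q := by
    rw [ip_inv_sqrt_smul_inv_sqrt_smul hq.le, hvv]; field_simp
  have hww' : ip ((√q)⁻¹ • w) ((√q)⁻¹ • w) = q := by
    rw [ip_inv_sqrt_smul_inv_sqrt_smul hq.le, hww]; field_simp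
  have hvw' : ip ((√q)⁻¹ • v) ((√q)⁻¹ • w) = p := by
    rw [ip_inv_sqrt_smul_inv_sqrt_smul hq.le, hvw]; field_simp
  have hleast := hred'.isLeast_normSet
  rw [hvv'] at hleast
  exact ⟨hvv', hww', hvw', hred'.linearIndependent, hleast⟩

/-- Proposition 1.1 (construction): `Ω_D(p,q)` is integral well-rounded with
minimal norm `q²` and determinant `q r √D`, and its rescaling by `1/√q` is
integral well-rounded with minimal norm `q`. -/
theorem stmt6 (p r q D : ℤ) (hp : 0 ≤ p) (hr : 1 ≤ r) (hq : 1 ≤ q) (hD : 1 ≤ D)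
    (hDsf : Squarefree D) (heq : p ^ 2 + D * r ^ 2 = q ^ 2)
    (hgcd : Int.gcd p q = 1) (hhalf : 2 * p ≤ q)
    (v w : ℝ × ℝ) (hv : v = ((q : ℝ), 0))
    (hw : w = ((p : ℝ), (r : ℝ) * Real.sqrt (D : ℝ))) :
    ip v v = (q : ℝ) ^ 2 ∧ ip w w = (q : ℝ) ^ 2 ∧ ip v w = (p : ℝ) * (q : ℝ) ∧
    LinearIndependent ℝ ![v, w] ∧
    v ∈ lat v w ∧ w ∈ lat v w ∧
    IsLeast (normSet v w) ((q : ℝ) ^ 2) ∧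
    |v.1 * w.2 - w.1 * v.2| = (q : ℝ) * (r : ℝ) * Real.sqrt (D : ℝ) ∧
    (∀ v' w' : ℝ × ℝ, v' = (Real.sqrt (q : ℝ))⁻¹ • v → w' = (Real.sqrt (q : ℝ))⁻¹ • w →
      ip v' v' = (q : ℝ) ∧ ip w' w' = (q : ℝ) ∧ ip v' w' = (p : ℝ) ∧
      LinearIndependent ℝ ![v', w'] ∧
      IsLeast (normSet v' w') (q : ℝ)) := by
  have hhalf' : 2 * |p| ≤ q := by rwa [abs_of_nonneg hp]
  exact stmt6_general p r q D (by positivity) (by positivity) (by positivity)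
    (by exact_mod_cast heq) (by exact_mod_cast hhalf') v w hv hw
end

section
/- Let Λ be an IWR planar lattice spanned by linearly independent minimal vectors v, w satisfying 0 ≤ 2⟨v,w⟩ ≤ ⟨v,v⟩ (so ⟨v,v⟩ = ⟨w,w⟩ = |Λ|). Then there exist integers p ≥ 0 and r, q, D ≥ 1 with D squarefree, p² + D r² = q², gcd(p, q) = 1, and 2p ≤ q, such that q·⟨v,w⟩ = p·|Λ| and q²·(|Λ|² − ⟨v,w⟩²) = D r² |Λ|² (that is, the cosine and sine of the angle between v and w equal p/q and r√D/q, respectively). Moreover, Λ is similar to Ω_D(p,q): there exist a real α > 0 and a linear isometry U of ℝ² with v = α·U(q, 0) and w = α·U(p, r√D). -/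
/-!
The cosine of the angle between `v` and `w` is the quotient of the integers `⟨v, w⟩` and `|Λ|`, so
it is a rational number `c` with `0 ≤ c ≤ 1 / 2`. Take `p / q` to be `c` in lowest terms and write
`q ^ 2 - p ^ 2 = D * r ^ 2` with `D` squarefree. The Gram matrix of `(v, w)` is then a positive
multiple of that of `(q, 0), (p, r√D)`, and a linear map which carries a basis to a family with
proportional Gram matrix is a similarity.
-/

open Module

/-- The standard inner product `ip` bundled as a bilinear form, so that the library's results on
forms and bases apply to it. -/
def ipForm : LinearMap.BilinForm ℝ (ℝ × ℝ) :=
  LinearMap.mk₂ ℝ ip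
    (fun x y z ↦ by simp only [ip, Prod.fst_add, Prod.snd_add]; ring)
    (fun c x y ↦ by simp only [ip, Prod.smul_fst, Prod.smul_snd, smul_eq_mul]; ring)
    (fun x y z ↦ by simp only [ip, Prod.fst_add, Prod.snd_add]; ring)
    (fun c x y ↦ by simp only [ip, Prod.smul_fst, Prod.smul_snd, smul_eq_mul]; ring)

theorem ipForm_apply (x y : ℝ × ℝ) : ipForm x y = x.1 * y.1 + x.2 * y.2 := rfl

theorem ipForm_isSymm : ipForm.IsSymm :=
  ⟨fun x y ↦ by simp only [ipForm_apply]; ring⟩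

theorem ip_self_pos {v : ℝ × ℝ} (hv : v ≠ 0) : 0 < ip v v := by
  refine (add_nonneg (mul_self_nonneg v.1) (mul_self_nonneg v.2)).lt_of_ne' fun h ↦ hv ?_
  obtain ⟨h₁, h₂⟩ := mul_self_add_mul_self_eq_zero.1 h
  exact Prod.ext h₁ h₂

theorem exists_similarity_of_gram_eq_sq_mul {ι K M M' : Type*} [Field K] [AddCommGroup M]
    [Module K M] [AddCommGroup M'] [Module K M'] (B : LinearMap.BilinForm K M)
    (B' : LinearMap.BilinForm K M') (b : Basis ι K M) (u : ι → M') {α : K} (hα : α ≠ 0)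
    (hgram : ∀ i j, B' (u i) (u j) = α ^ 2 * B (b i) (b j)) :
    ∃ U : M →ₗ[K] M', (∀ x y, B' (U x) (U y) = B x y) ∧ ∀ i, u i = α • U (b i) := by
  let U : M →ₗ[K] M' := b.constr K fun i ↦ α⁻¹ • u i
  have hU (i : ι) : U (b i) = α⁻¹ • u i := b.constr_basis K _ i
  have hB : B'.compl₁₂ U U = B := LinearMap.BilinForm.ext_basis b fun i j ↦ by
    simp only [LinearMap.compl₁₂_apply, hU, map_smul, LinearMap.smul_apply, smul_eq_mul, hgram]
    field_simp
  exact ⟨U, fun x y ↦ LinearMap.congr_fun₂ hB x y, fun i ↦ by rw [hU, smul_inv_smul₀ hα]⟩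

theorem linearIndependent_pair_triangular {R : Type*} [Ring R] [NoZeroDivisors R] {q p s : R}
    (hq : q ≠ 0) (hs : s ≠ 0) : LinearIndependent R ![(q, (0 : R)), (p, s)] := by
  refine LinearIndependent.pair_iff.2 fun a b h ↦ ?_
  obtain ⟨h₁, h₂⟩ := Prod.ext_iff.1 h
  have hb : b = 0 := by simpa [hs] using h₂
  exact ⟨by simpa [hb, hq] using h₁, hb⟩

theorem exists_sq_mul_squarefree {n : ℤ} (hn : 0 < n) :
    ∃ r D : ℤ, 1 ≤ r ∧ 1 ≤ D ∧ Squarefree D ∧ D * r ^ 2 = n := by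
  lift n to ℕ using hn.le
  obtain ⟨D, r, hD, hr, hn', hsq⟩ := Nat.sq_mul_squarefree_of_pos (Int.natCast_pos.1 hn)
  exact ⟨r, D, by exact_mod_cast hr, by exact_mod_cast hD, Int.squarefree_natCast.2 hsq,
    by rw [mul_comm]; exact_mod_cast hn'⟩

theorem exists_squarefree_num_sq_add_eq_den_sq {c : ℚ} (hc : |c| < 1) :
    ∃ r D : ℤ, 1 ≤ r ∧ 1 ≤ D ∧ Squarefree D ∧ c.num ^ 2 + D * r ^ 2 = (c.den : ℤ) ^ 2 := by
  have hlt : c.num ^ 2 < (c.den : ℤ) ^ 2 := by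
    have : (c.num / c.den : ℚ) ^ 2 < 1 := by rwa [c.num_div_den, sq_lt_one_iff_abs_lt_one]
    rw [div_pow, div_lt_one (by positivity)] at this
    exact_mod_cast this
  obtain ⟨r, D, hr, hD, hsq, h⟩ := exists_sq_mul_squarefree (sub_pos.2 hlt)
  exact ⟨r, D, hr, hD, hsq, by rw [h, add_sub_cancel]⟩

theorem mul_num_le_den {n : ℤ} {c : ℚ} (h : n * c ≤ 1) : n * c.num ≤ c.den := by
  rw [← c.num_div_den, ← mul_div_assoc, div_le_one (by positivity)] at h
  exact_mod_cast h

theorem den_mul_eq_num_mul {K : Type*} [DivisionRing K] [CharZero K] {c : ℚ} {x y : K}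
    (h : x = c * y) : c.den * x = c.num * y := by
  have hc : (c.den : K) * c = c.num := by exact_mod_cast c.den_mul_eq_num
  rw [h, ← mul_assoc, hc]

theorem exists_rat_ip_eq_mul {v w : ℝ × ℝ} (hv : v ≠ 0) (hvv : ∃ a : ℤ, ip v v = a)
    (hvw : ∃ b : ℤ, ip v w = b) : ∃ c : ℚ, ip v w = c * ip v v := by
  obtain ⟨⟨a, ha⟩, b, hb⟩ := And.intro hvv hvw
  have ha₀ : (a : ℝ) ≠ 0 := ha ▸ (ip_self_pos hv).ne'
  exact ⟨b / a, by rw [ha, hb]; push_cast; field_simp⟩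

section Similarity

variable {E : Type*} [AddCommGroup E] [Module ℝ E] {B : LinearMap.BilinForm ℝ E} {v w : E}

theorem exists_similarity_of_cos_eq (hB : B.IsSymm) {p q s N : ℝ} (hN : 0 < N) (hq : q ≠ 0)
    (hs : s ≠ 0) (hpqs : p ^ 2 + s ^ 2 = q ^ 2) (hvv : B v v = N) (hww : B w w = N)
    (hvw : q * B v w = p * N) :
    ∃ (α : ℝ) (U : (ℝ × ℝ) →ₗ[ℝ] E), 0 < α ∧
      (∀ z₁ z₂ : ℝ × ℝ, B (U z₁) (U z₂) = ip z₁ z₂) ∧ v = α • U (q, 0) ∧ w = α • U (p, s) := by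
  obtain ⟨α, hα, hNα⟩ : ∃ α : ℝ, 0 < α ∧ N = α ^ 2 * q ^ 2 :=
    ⟨√N / |q|, by positivity, by rw [div_pow, sq_abs, Real.sq_sqrt hN.le]; field_simp⟩
  have hvw' : B v w = α ^ 2 * (q * p) :=
    mul_left_cancel₀ hq (by rw [hvw, hNα]; ring)
  let b := basisOfLinearIndependentOfCardEqFinrank
    (linearIndependent_pair_triangular (p := p) hq hs) (by simp)
  have hb : ⇑b = ![(q, 0), (p, s)] := coe_basisOfLinearIndependentOfCardEqFinrank _ _
  have hsymm : B w v = B v w := hB.eq w v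
  have hgram : ∀ i j, B (![v, w] i) (![v, w] j) = α ^ 2 * ipForm (b i) (b j) := by
    simp only [Fin.forall_fin_two, hb, Matrix.cons_val_zero, Matrix.cons_val_one, ipForm_apply]
    refine ⟨⟨?_, ?_⟩, ?_, ?_⟩
    · linear_combination hvv + hNα
    · linear_combination hvw'
    · linear_combination hsymm + hvw'
    · linear_combination hww + hNα - α ^ 2 * hpqs
  obtain ⟨U, hU, huv⟩ := exists_similarity_of_gram_eq_sq_mul ipForm B b ![v, w] hα.ne' hgram
  exact ⟨α, U, hα, hU, by simpa [hb] using huv 0, by simpa [hb] using huv 1⟩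

theorem stmt7_general (hB : B.IsSymm) {N : ℝ} (hN : 0 < N) (hvv : B v v = N) (hww : B w w = N)
    (hcos : ∃ c : ℚ, B v w = c * N) (hang1 : 0 ≤ 2 * B v w) (hang2 : 2 * B v w ≤ N) :
    ∃ p r q D : ℤ, 0 ≤ p ∧ 1 ≤ r ∧ 1 ≤ q ∧ 1 ≤ D ∧ Squarefree D ∧
      p ^ 2 + D * r ^ 2 = q ^ 2 ∧ Int.gcd p q = 1 ∧ 2 * p ≤ q ∧
      (q : ℝ) * B v w = (p : ℝ) * N ∧
      (q : ℝ) ^ 2 * (N ^ 2 - B v w ^ 2) = (D : ℝ) * (r : ℝ) ^ 2 * N ^ 2 ∧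
      ∃ (α : ℝ) (U : (ℝ × ℝ) →ₗ[ℝ] E), 0 < α ∧
        (∀ z₁ z₂ : ℝ × ℝ, B (U z₁) (U z₂) = ip z₁ z₂) ∧
        v = α • U ((q : ℝ), 0) ∧ w = α • U ((p : ℝ), (r : ℝ) * √(D : ℝ)) := by
  obtain ⟨c, hc⟩ := hcos
  have hc₀ : 0 ≤ c := by
    have : (0 : ℝ) ≤ c := nonneg_of_mul_nonneg_left (by linarith) hN
    exact_mod_cast this
  have hc₁ : 2 * c ≤ 1 := by
    have : 2 * (c : ℝ) ≤ 1 := le_of_mul_le_mul_right (by linarith) hN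
    exact_mod_cast this
  obtain ⟨r, D, hr, hD, hsq, hpq⟩ :=
    exists_squarefree_num_sq_add_eq_den_sq (abs_lt.2 ⟨by linarith, by linarith⟩ : |c| < 1)
  have hpq' : (c.num : ℝ) ^ 2 + D * (r : ℝ) ^ 2 = (c.den : ℝ) ^ 2 := by exact_mod_cast hpq
  have hqp : (c.den : ℝ) * B v w = c.num * N := den_mul_eq_num_mul hc
  have hD₀ : (0 : ℝ) < D := by exact_mod_cast hD
  have hs₀ : 0 < r * √(D : ℝ) := mul_pos (by exact_mod_cast hr) (Real.sqrt_pos.2 hD₀)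
  have hs : (c.num : ℝ) ^ 2 + (r * √(D : ℝ)) ^ 2 = (c.den : ℝ) ^ 2 := by
    rw [mul_pow, Real.sq_sqrt hD₀.le, mul_comm, hpq']
  refine ⟨c.num, r, c.den, D, Rat.num_nonneg.2 hc₀, hr, by exact_mod_cast c.den_pos, hD, hsq, hpq,
    c.reduced, mul_num_le_den (n := 2) (by exact_mod_cast hc₁), by exact_mod_cast hqp, ?_, ?_⟩ <;>
    rw [Int.cast_natCast]
  · linear_combination (-(c.den : ℝ) * B v w - c.num * N) * hqp - N ^ 2 * hpq'
  · exact exists_similarity_of_cos_eq hB hN (by positivity) hs₀.ne' hs hvv hww hqp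

end Similarity

/-- Proposition 1.1 (parameterization): an IWR planar lattice, spanned by a
minimal basis `v, w` with `0 ≤ 2⟨v,w⟩ ≤ ⟨v,v⟩ = |Λ| = N`, has
`cos θ = p/q`, `sin θ = r√D/q` for a quadruple `(p,r,q,D)` satisfying (1.5),
and is similar to `Ω_D(p,q)`. -/
theorem stmt7 (v w : ℝ × ℝ) (N : ℝ)
    (hli : LinearIndependent ℝ ![v, w])
    (hint : (∃ a : ℤ, ip v v = (a : ℝ)) ∧ (∃ a : ℤ, ip v w = (a : ℝ)) ∧
      (∃ a : ℤ, ip w w = (a : ℝ)))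
    (hvv : ip v v = N) (hww : ip w w = N)
    (hmin : IsLeast (normSet v w) N)
    (hang1 : 0 ≤ 2 * ip v w) (hang2 : 2 * ip v w ≤ ip v v) :
    ∃ p r q D : ℤ, 0 ≤ p ∧ 1 ≤ r ∧ 1 ≤ q ∧ 1 ≤ D ∧ Squarefree D ∧
      p ^ 2 + D * r ^ 2 = q ^ 2 ∧ Int.gcd p q = 1 ∧ 2 * p ≤ q ∧
      (q : ℝ) * ip v w = (p : ℝ) * N ∧
      (q : ℝ) ^ 2 * (N ^ 2 - ip v w ^ 2) = (D : ℝ) * (r : ℝ) ^ 2 * N ^ 2 ∧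
      ∃ (α : ℝ) (U : (ℝ × ℝ) →ₗ[ℝ] (ℝ × ℝ)), 0 < α ∧
        (∀ z₁ z₂ : ℝ × ℝ, ip (U z₁) (U z₂) = ip z₁ z₂) ∧
        v = α • U ((q : ℝ), 0) ∧ w = α • U ((p : ℝ), (r : ℝ) * Real.sqrt (D : ℝ)) := by
  subst hvv
  exact stmt7_general ipForm_isSymm (ip_self_pos (hli.ne_zero 0)) rfl hww
    (exists_rat_ip_eq_mul (hli.ne_zero 0) hint.1 hint.2.1) hang1 hang2
end

section
/- Fix a real number Δ > 0 and a real number s ≥ 3. For T ∈ [Δ, 2Δ/√3], define E(T) = Σ_{(x,y) ∈ ℤ² ∖ {(0,0)}} (T x² + T y² + 2 x y √(T² − Δ²))^{−s} (this series converges). Then E is a decreasing function of T on [Δ, 2Δ/√3]: if Δ ≤ T₁ ≤ T₂ ≤ 2Δ/√3 then E(T₂) ≤ E(T₁). -/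
/-- The Epstein zeta function `E_Λ(s)` of the well-rounded planar lattice of
determinant `Δ` and minimal norm `T`, expressed through the Gram quadratic form
`Q(x,y) = T x² + T y² + 2xy√(T² − Δ²)` of a minimal basis. -/
noncomputable def epstein (Δ s T : ℝ) : ℝ :=
  ∑' xy : {v : ℤ × ℤ // v ≠ 0},
    (T * ((xy : ℤ × ℤ).1 : ℝ) ^ 2 + T * ((xy : ℤ × ℤ).2 : ℝ) ^ 2
      + 2 * ((xy : ℤ × ℤ).1 : ℝ) * ((xy : ℤ × ℤ).2 : ℝ) * Real.sqrt (T ^ 2 - Δ ^ 2)) ^ (-s)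

open Real Set

/-!
Up to the factor `Δ ^ (-s)`, the lattice with `T = Δ cosh u` has the form
`(x² + y²) cosh u + 2 x y sinh u`, where `0 ≤ u ≤ log √3`: the square lattice is `u = 0` and the
hexagonal one `u = log √3`. Both end points are critical, and near each of them the
symmetries of the lattice at that end are used. Both arguments work at `u = log (7 / 6)`.

* On `[log (7 / 6), log √3]` the sum of the terms decreases over every orbit of the rotation of
  order three. The derivatives of the three terms are `hexSlope t a` for three shares `a` of sum `1`
  and square sum `1 / 2`; any function `α + β a + κ a (a - 1 / 2)` has the sum `3 α + β` over them,
  and Newton interpolation bounds `hexSlope` by such a function with `3 α + β = 0`. Passing from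
  the exponent `3` to larger ones only increases the weight of the negative derivatives.
* On `[0, log (7 / 6)]` pair `v` with its mirror image, that is `u` with `-u`. A second order
  estimate shows that such a pair increases by at most a multiple of `u²`, and the decrease of
  the four unit vectors outweighs the sum of these multiples.
-/

/-! ### The Gram form and its Epstein sum -/

/-- The form `Q` of determinant one, with `T = cosh u` and `√(T² - 1) = sinh u`. -/
noncomputable def gramForm (u x y : ℝ) : ℝ :=
  (x ^ 2 + y ^ 2) * cosh u + 2 * x * y * sinh u

/-- The derivative of `gramForm` in `u`. -/
noncomputable def gramFormDeriv (u x y : ℝ) : ℝ :=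
  (x ^ 2 + y ^ 2) * sinh u + 2 * x * y * cosh u

lemma hasDerivAt_gramForm (u x y : ℝ) :
    HasDerivAt (fun u => gramForm u x y) (gramFormDeriv u x y) u :=
  ((hasDerivAt_cosh u).const_mul _).add ((hasDerivAt_sinh u).const_mul _)

lemma hasDerivAt_gramFormDeriv (u x y : ℝ) :
    HasDerivAt (fun u => gramFormDeriv u x y) (gramForm u x y) u :=
  ((hasDerivAt_sinh u).const_mul _).add ((hasDerivAt_cosh u).const_mul _)

lemma gramForm_eq_exp (u x y : ℝ) :
    gramForm u x y = ((x + y) ^ 2 * exp u + (x - y) ^ 2 * exp (-u)) / 2 := by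
  rw [gramForm, cosh_eq, sinh_eq]
  ring

lemma gramFormDeriv_eq_exp (u x y : ℝ) :
    gramFormDeriv u x y = ((x + y) ^ 2 * exp u - (x - y) ^ 2 * exp (-u)) / 2 := by
  rw [gramFormDeriv, cosh_eq, sinh_eq]
  ring

lemma gramForm_neg_right (u x y : ℝ) : gramForm u x (-y) = gramForm (-u) x y := by
  simp only [gramForm, cosh_neg, sinh_neg]
  ring

lemma abs_gramFormDeriv_le (u x y : ℝ) : |gramFormDeriv u x y| ≤ gramForm u x y := by
  have hp : 0 ≤ (x + y) ^ 2 * exp u := by positivity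
  have hm : 0 ≤ (x - y) ^ 2 * exp (-u) := by positivity
  rw [gramFormDeriv_eq_exp, gramForm_eq_exp, abs_le]
  constructor <;> linarith

lemma exp_neg_mul_le_gramForm {u c : ℝ} (hu : |u| ≤ c) (x y : ℝ) :
    exp (-c) * (x ^ 2 + y ^ 2) ≤ gramForm u x y := by
  have hp : exp (-c) ≤ exp u := exp_le_exp.2 (abs_le.1 hu).1
  have hm : exp (-c) ≤ exp (-u) := exp_le_exp.2 (neg_le_neg (abs_le.1 hu).2)
  calc exp (-c) * (x ^ 2 + y ^ 2)
      = ((x + y) ^ 2 * exp (-c) + (x - y) ^ 2 * exp (-c)) / 2 := by ring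
    _ ≤ ((x + y) ^ 2 * exp u + (x - y) ^ 2 * exp (-u)) / 2 := by gcongr
    _ = gramForm u x y := (gramForm_eq_exp u x y).symm

lemma gramForm_nonneg (u x y : ℝ) : 0 ≤ gramForm u x y :=
  (abs_nonneg _).trans (abs_gramFormDeriv_le u x y)

lemma gramForm_pos (u : ℝ) {x y : ℝ} (h : 0 < x ^ 2 + y ^ 2) : 0 < gramForm u x y :=
  (mul_pos (exp_pos _) h).trans_le (exp_neg_mul_le_gramForm le_rfl x y)

lemma hasDerivAt_gramForm_rpow (u r : ℝ) {x y : ℝ} (h : 0 < x ^ 2 + y ^ 2) :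
    HasDerivAt (fun u => gramForm u x y ^ r)
      (gramFormDeriv u x y * r * gramForm u x y ^ (r - 1)) u :=
  (hasDerivAt_gramForm u x y).rpow_const (Or.inl (gramForm_pos u h).ne')

/-- The term of the Epstein zeta function of determinant one at the lattice point `v`; it vanishes
at `v = 0`, since `0 ^ (-s) = 0` in Lean, so that the sum can be taken over all of `ℤ × ℤ`. -/
noncomputable def epsteinTerm (s u : ℝ) (v : ℤ × ℤ) : ℝ :=
  gramForm u v.1 v.2 ^ (-s)

lemma epsteinTerm_zero {s : ℝ} (hs : s ≠ 0) (u : ℝ) : epsteinTerm s u 0 = 0 := by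
  simp [epsteinTerm, gramForm, zero_rpow (neg_ne_zero.2 hs)]

lemma sq_add_sq_pos {v : ℤ × ℤ} (hv : v ≠ 0) : (0 : ℝ) < (v.1 : ℝ) ^ 2 + (v.2 : ℝ) ^ 2 := by
  have h : v.1 ≠ 0 ∨ v.2 ≠ 0 := by
    contrapose! hv
    exact Prod.ext hv.1 hv.2
  rcases h with h | h <;> positivity

lemma sq_norm_le_sq_add_sq (v : ℤ × ℤ) : ‖![v.1, v.2]‖ ^ 2 ≤ (v.1 : ℝ) ^ 2 + (v.2 : ℝ) ^ 2 := by
  refine (pow_le_pow_left₀ (norm_nonneg _)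
    ((pi_norm_le_iff_of_nonneg (sqrt_nonneg ((v.1 : ℝ) ^ 2 + (v.2 : ℝ) ^ 2))).2 ?_) 2).trans_eq
    (sq_sqrt (by positivity))
  rw [Fin.forall_fin_two]
  constructor <;> refine le_sqrt_of_sq_le ?_ <;> simp [Int.norm_eq_abs, sq_nonneg]

lemma summable_epsteinTerm {s : ℝ} (hs : 1 < s) (u : ℝ) : Summable (epsteinTerm s u) := by
  have hsum : Summable fun v : ℤ × ℤ => exp (-|u|) ^ (-s) * ‖![v.1, v.2]‖ ^ (-(2 * s)) :=
    ((finTwoArrowEquiv ℤ).symm.summable_iff.2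
      (EisensteinSeries.summable_one_div_norm_rpow (by linarith : 2 < 2 * s))).mul_left _
  refine hsum.of_nonneg_of_le (fun v => rpow_nonneg (gramForm_nonneg _ _ _) _) fun v => ?_
  rcases eq_or_ne v 0 with rfl | hv
  · rw [epsteinTerm_zero (by linarith)]
    positivity
  have hnorm : 0 < ‖![v.1, v.2]‖ := by
    refine norm_pos_iff.2 fun h => hv (Prod.ext ?_ ?_)
    exacts [congrFun h 0, congrFun h 1]
  have hle : exp (-|u|) * ‖![v.1, v.2]‖ ^ 2 ≤ gramForm u v.1 v.2 :=
    (mul_le_mul_of_nonneg_left (sq_norm_le_sq_add_sq v) (exp_pos _).le).trans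
      (exp_neg_mul_le_gramForm le_rfl _ _)
  calc epsteinTerm s u v
      ≤ (exp (-|u|) * ‖![v.1, v.2]‖ ^ 2) ^ (-s) :=
        rpow_le_rpow_of_nonpos (by positivity) hle (by linarith)
    _ = exp (-|u|) ^ (-s) * ‖![v.1, v.2]‖ ^ (-(2 * s)) := by
        rw [mul_rpow (exp_pos _).le (by positivity), ← rpow_natCast, ← rpow_mul hnorm.le]
        norm_num

lemma antitoneOn_tsum_of_perm {α β : Type*} [Preorder β] (σ : Equiv.Perm α) {n : ℕ} (hn : n ≠ 0)
    {f : β → α → ℝ} {I : Set β} (hf : ∀ u ∈ I, Summable (f u))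
    (hanti : ∀ v, AntitoneOn (fun u => ∑ i ∈ Finset.range n, f u ((σ ^ i) v)) I) :
    AntitoneOn (fun u => ∑' v, f u v) I := by
  have hσ : ∀ u ∈ I, ∀ i ∈ Finset.range n, Summable fun v => f u ((σ ^ i) v) :=
    fun u hu i _ => (σ ^ i).summable_iff.2 (hf u hu)
  have hsum : ∀ u ∈ I, ∑' v, ∑ i ∈ Finset.range n, f u ((σ ^ i) v) = n * ∑' v, f u v := by
    intro u hu
    rw [Summable.tsum_finsetSum (hσ u hu)]
    simp only [(σ ^ _).tsum_eq (f u), Finset.sum_const, Finset.card_range, nsmul_eq_mul]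
  intro u hu w hw huw
  have hle := Summable.tsum_le_tsum (fun v => hanti v hu hw huw)
    (summable_sum (hσ w hw)) (summable_sum (hσ u hu))
  rw [hsum u hu, hsum w hw] at hle
  exact le_of_mul_le_mul_left hle (by positivity)

/-! ### Near the hexagonal lattice -/

/-- The rotation of order three about the origin, in the coordinates of a basis of the hexagonal
lattice; it permutes the entries of a triple `(x, y, z)` of sum zero cyclically. -/
def hexRotation : Equiv.Perm (ℤ × ℤ) where
  toFun v := (v.2, -v.1 - v.2)
  invFun v := (-v.1 - v.2, v.1)
  left_inv v := Prod.ext (by simp only; ring) rfl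
  right_inv v := Prod.ext rfl (by simp only; ring)

/-- The number `(3 - e²ᵘ) / 2`, which measures how far the lattice is from the hexagonal one: it
decreases in `u` and vanishes at `u = log √3`. -/
noncomputable def hexDefect (u : ℝ) : ℝ := (3 - exp (2 * u)) / 2

lemma gramForm_eq_hexDefect (u : ℝ) {x y z : ℝ} (h : x + y + z = 0) :
    gramForm u x y = exp (-u) * (x ^ 2 + y ^ 2 + z ^ 2 - hexDefect u * z ^ 2) := by
  obtain rfl : z = -(x + y) := by linarith
  have hexp : exp (2 * u) * exp (-u) = exp u := by rw [← exp_add]; ring_nf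
  rw [gramForm_eq_exp, hexDefect]
  linear_combination (-(x + y) ^ 2 / 2) * hexp

lemma gramFormDeriv_eq_hexDefect (u : ℝ) {x y z : ℝ} (h : x + y + z = 0) :
    gramFormDeriv u x y = -exp (-u) * (x ^ 2 + y ^ 2 + z ^ 2 - (3 - hexDefect u) * z ^ 2) := by
  obtain rfl : z = -(x + y) := by linarith
  have hexp : exp (2 * u) * exp (-u) = exp u := by rw [← exp_add]; ring_nf
  rw [gramFormDeriv_eq_exp, hexDefect]
  linear_combination (-(x + y) ^ 2 / 2) * hexp

lemma hexDefect_nonneg {u : ℝ} (hu : u ≤ log √3) : 0 ≤ hexDefect u := by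
  have hexp : exp (2 * u) ≤ 3 := by
    calc exp (2 * u) ≤ exp (2 * log √3) := by gcongr
      _ = 3 := by rw [log_sqrt (by norm_num), mul_div_cancel₀ _ two_ne_zero, exp_log (by norm_num)]
  rw [hexDefect]
  linarith

lemma hexDefect_le {u : ℝ} (hu : log (7 / 6) ≤ u) : hexDefect u ≤ 5 / 6 := by
  have hexp : (7 / 6) ^ 2 ≤ exp (2 * u) := by
    calc ((7 / 6) ^ 2 : ℝ) = exp (log (7 / 6)) ^ 2 := by rw [exp_log (by norm_num)]
      _ ≤ exp u ^ 2 := by gcongr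
      _ = exp (2 * u) := by rw [← exp_nat_mul, Nat.cast_ofNat]
  rw [hexDefect]
  linarith

/-- With `t = hexDefect u` and `a` the share of `z ^ 2` in `x ^ 2 + y ^ 2 + z ^ 2`, where
`x + y + z = 0`, the derivative of `gramForm u x y ^ (-3)` in `u` up to a positive factor that is
common to the orbit of `(x, y)` under `hexRotation`. -/
noncomputable def hexSlope (t a : ℝ) : ℝ :=
  (1 - (3 - t) * a) / (1 - t * a) ^ 4

/-- The divided difference of `hexSlope t` in the remainder of its Newton interpolation at the nodes
`0, 1/2, 1/2`, up to a negative factor, where `X = 1 / (1 - t a)` and `Y = 1 / (1 - t / 2)`. The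
second factors are the sums of the complete homogeneous symmetric polynomials of degree `3` and `2`
in the four values `1, X, Y, Y`. -/
def hexRemainder (t X Y : ℝ) : ℝ :=
  (3 - 2 * t) * (1 + X + 2 * Y + X ^ 2 + 2 * X * Y + 3 * Y ^ 2
      + X ^ 3 + 2 * X ^ 2 * Y + 3 * X * Y ^ 2 + 4 * Y ^ 3)
    - (3 - t) * (1 + X + 2 * Y + X ^ 2 + 2 * X * Y + 3 * Y ^ 2)

lemma hexRemainder_nonneg {t X Y : ℝ} (ht : t ≤ 1) (hX : 1 ≤ X) (hY : 1 ≤ Y) :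
    0 ≤ hexRemainder t X Y := by
  obtain ⟨p, rfl⟩ : ∃ p, X = 1 + p := ⟨X - 1, by ring⟩
  obtain ⟨q, rfl⟩ : ∃ q, Y = 1 + q := ⟨Y - 1, by ring⟩
  obtain ⟨r, rfl⟩ : ∃ r, t = 1 - r := ⟨1 - t, by ring⟩
  have hp : 0 ≤ p := by linarith
  have hq : 0 ≤ q := by linarith
  have hr : 0 ≤ r := by linarith
  rw [hexRemainder]
  ring_nf
  positivity

lemma exists_forall_hexSlope_eq {t : ℝ} (ht : 1 - t / 2 ≠ 0) :
    ∃ κ : ℝ, ∀ a, 1 - t * a ≠ 0 →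
      hexSlope t a = 1 + 2 * a * (hexSlope t (1 / 2) - 1) + κ * (a * (a - 1 / 2))
        - t ^ 2 * a * (a - 1 / 2) ^ 2 * (1 / (1 - t * a)) * (1 / (1 - t / 2)) ^ 2
          * hexRemainder t (1 / (1 - t * a)) (1 / (1 - t / 2)) := by
  have ht' : 2 - t ≠ 0 := fun h => ht (by linarith)
  obtain ⟨Y, hY⟩ : ∃ Y, Y = 1 / (1 - t / 2) := ⟨_, rfl⟩
  refine ⟨t * Y ^ 2 * ((3 - t) * (1 + 2 * Y + 3 * Y ^ 2)
    - (3 - 2 * t) * (1 + 2 * Y + 3 * Y ^ 2 + 4 * Y ^ 3)), fun a ha => ?_⟩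
  subst hY
  rw [hexSlope, hexSlope, hexRemainder, mul_one_div]
  field_simp
  ring

lemma hexSlope_half_le {t : ℝ} (ht₀ : 0 ≤ t) (ht : t ≤ 5 / 6) : hexSlope t (1 / 2) ≤ -1 / 2 := by
  have hfac : 0 ≤ 1 - 3 * t / 2 + t ^ 2 / 2 - t ^ 3 / 16 := by
    nlinarith [mul_nonneg ht₀ (sub_nonneg.2 ht), mul_nonneg (sq_nonneg t) (sub_nonneg.2 ht)]
  have hpow : (1 - t * (1 / 2)) ^ 4 ≤ 1 - t := by
    linear_combination mul_nonneg ht₀ hfac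
  have hpos : 0 < (1 - t * (1 / 2)) ^ 4 := pow_pos (by linarith) 4
  rw [hexSlope, div_le_iff₀ hpos]
  linarith

lemma exists_forall_hexSlope_le {t : ℝ} (ht₀ : 0 ≤ t) (ht : t ≤ 5 / 6) :
    ∃ κ : ℝ, ∀ a ∈ Icc (0 : ℝ) 1, hexSlope t a ≤ 1 - 3 * a + κ * (a * (a - 1 / 2)) := by
  obtain ⟨κ, hκ⟩ := exists_forall_hexSlope_eq (t := t) (by linarith)
  refine ⟨κ, fun a ⟨ha₀, ha₁⟩ => ?_⟩
  have hta : t * a ≤ 5 / 6 := (mul_le_of_le_one_right ht₀ ha₁).trans ht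
  have hX : 1 ≤ 1 / (1 - t * a) := one_le_one_div (by linarith) (by linarith [mul_nonneg ht₀ ha₀])
  have hY : 1 ≤ 1 / (1 - t / 2) := one_le_one_div (by linarith) (by linarith)
  have hrem := mul_nonneg
    (show 0 ≤ t ^ 2 * a * (a - 1 / 2) ^ 2 * (1 / (1 - t * a)) * (1 / (1 - t / 2)) ^ 2 by positivity)
    (hexRemainder_nonneg (ht.trans (by norm_num)) hX hY)
  have hhalf := mul_le_mul_of_nonneg_left (hexSlope_half_le ht₀ ht) ha₀
  rw [hκ a (by linarith)]
  linarith

/-- Three nonnegative numbers of sum `1` and square sum `1 / 2` are the normalised squares of three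
reals of sum zero. -/
lemma hexSlope_add_add_nonpos {t a b c : ℝ} (ht₀ : 0 ≤ t) (ht : t ≤ 5 / 6)
    (ha : 0 ≤ a) (hb : 0 ≤ b) (hc : 0 ≤ c) (hsum : a + b + c = 1)
    (hsq : a ^ 2 + b ^ 2 + c ^ 2 = 1 / 2) :
    hexSlope t a + hexSlope t b + hexSlope t c ≤ 0 := by
  obtain ⟨κ, hκ⟩ := exists_forall_hexSlope_le ht₀ ht
  have hquad : a * (a - 1 / 2) + b * (b - 1 / 2) + c * (c - 1 / 2) = 0 := by linarith
  calc hexSlope t a + hexSlope t b + hexSlope t c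
      ≤ (1 - 3 * a + κ * (a * (a - 1 / 2))) + (1 - 3 * b + κ * (b * (b - 1 / 2)))
        + (1 - 3 * c + κ * (c * (c - 1 / 2))) :=
        add_le_add_three (hκ a ⟨ha, by linarith⟩) (hκ b ⟨hb, by linarith⟩) (hκ c ⟨hc, by linarith⟩)
    _ = 0 := by linear_combination κ * hquad - 3 * hsum

lemma mul_rpow_le_mul_rpow_of_nonpos {g D K r : ℝ} (hD : 0 < D) (hK : 0 < K) (hr : r ≤ 0)
    (h : 0 ≤ g * (D - K)) : g * D ^ r ≤ g * K ^ r := by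
  rcases lt_trichotomy D K with hDK | rfl | hKD
  · exact mul_le_mul_of_nonpos_left (rpow_le_rpow_of_nonpos hD hDK.le hr)
      (nonpos_of_mul_nonneg_left h (sub_neg.2 hDK))
  · rfl
  · exact mul_le_mul_of_nonneg_left (rpow_le_rpow_of_nonpos hK hKD.le hr)
      (nonneg_of_mul_nonneg_left h (sub_pos.2 hKD))

lemma hexSlope_rpow_le {s t a : ℝ} (hs : 3 ≤ s) (ht₀ : 0 ≤ t) (ht : t < 1) (ha : a ≤ 1) :
    (1 - (3 - t) * a) * (1 - t * a) ^ (-s - 1)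
      ≤ ((3 - 2 * t) / (3 - t)) ^ (3 - s) * hexSlope t a := by
  have hD : 0 < 1 - t * a := by linarith [mul_le_mul_of_nonneg_left ha ht₀]
  have hK : 0 < (3 - 2 * t) / (3 - t) := div_pos (by linarith) (by linarith)
  -- `(3 - 2t) / (3 - t)` is the value of `1 - t a` where `1 - (3 - t) a` changes sign.
  have hsign : 0 ≤ (1 - (3 - t) * a) / (1 - t * a) ^ 4
      * (1 - t * a - (3 - 2 * t) / (3 - t)) := by
    have hdiff : 1 - t * a - (3 - 2 * t) / (3 - t) = t / (3 - t) * (1 - (3 - t) * a) := by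
      have : 3 - t ≠ 0 := by linarith
      field_simp
      ring
    rw [hdiff, div_mul_eq_mul_div, mul_left_comm]
    have : 0 < 3 - t := by linarith
    exact div_nonneg (mul_nonneg (by positivity) (mul_self_nonneg _)) (by positivity)
  have hsplit : (1 - t * a) ^ (-s - 1) = (1 - t * a) ^ (3 - s) / (1 - t * a) ^ 4 := by
    rw [← rpow_sub_natCast hD.ne']
    push_cast
    ring_nf
  calc (1 - (3 - t) * a) * (1 - t * a) ^ (-s - 1)
      = hexSlope t a * (1 - t * a) ^ (3 - s) := by rw [hsplit, hexSlope]; ring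
    _ ≤ hexSlope t a * ((3 - 2 * t) / (3 - t)) ^ (3 - s) :=
        mul_rpow_le_mul_rpow_of_nonpos hD hK (by linarith) hsign
    _ = _ := mul_comm _ _

lemma deriv_gramForm_rpow_le {s u x y z S : ℝ} (hs : 3 ≤ s) (ht₀ : 0 ≤ hexDefect u)
    (ht : hexDefect u < 1) (h : x + y + z = 0) (hS : x ^ 2 + y ^ 2 + z ^ 2 = S) (hpos : 0 < S) :
    gramFormDeriv u x y * (-s) * gramForm u x y ^ (-s - 1)
      ≤ s * (exp (-u) * S) ^ (-s) * ((3 - 2 * hexDefect u) / (3 - hexDefect u)) ^ (3 - s)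
        * hexSlope (hexDefect u) (z ^ 2 / S) := by
  set t := hexDefect u
  set a := z ^ 2 / S
  have ha : a ≤ 1 := (div_le_one hpos).2 (by linarith [sq_nonneg x, sq_nonneg y])
  have haS : S * a = z ^ 2 := mul_div_cancel₀ _ hpos.ne'
  have hD : 0 ≤ 1 - t * a := by linarith [mul_le_mul_of_nonneg_left ha ht₀]
  have hR : 0 < exp (-u) * S := by positivity
  have hform : gramForm u x y = exp (-u) * S * (1 - t * a) := by
    rw [gramForm_eq_hexDefect u h, hS, ← haS]
    ring
  have hderiv : gramFormDeriv u x y = -(exp (-u) * S * (1 - (3 - t) * a)) := by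
    rw [gramFormDeriv_eq_hexDefect u h, hS, ← haS]
    ring
  calc gramFormDeriv u x y * (-s) * gramForm u x y ^ (-s - 1)
      = s * (exp (-u) * S) ^ (-s) * ((1 - (3 - t) * a) * (1 - t * a) ^ (-s - 1)) := by
        rw [hform, hderiv, mul_rpow hR.le hD, rpow_sub_one hR.ne' (-s)]
        field_simp
    _ ≤ s * (exp (-u) * S) ^ (-s) * (((3 - 2 * t) / (3 - t)) ^ (3 - s) * hexSlope t a) :=
        mul_le_mul_of_nonneg_left (hexSlope_rpow_le hs ht₀ ht ha) (by positivity)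
    _ = _ := (mul_assoc _ _ _).symm

lemma deriv_gramForm_rpow_add_add_nonpos {s u x y z : ℝ} (hs : 3 ≤ s) (ht₀ : 0 ≤ hexDefect u)
    (ht : hexDefect u ≤ 5 / 6) (h : x + y + z = 0) (hpos : 0 < x ^ 2 + y ^ 2 + z ^ 2) :
    gramFormDeriv u x y * (-s) * gramForm u x y ^ (-s - 1)
      + gramFormDeriv u y z * (-s) * gramForm u y z ^ (-s - 1)
      + gramFormDeriv u z x * (-s) * gramForm u z x ^ (-s - 1) ≤ 0 := by
  obtain ⟨S, hS⟩ : ∃ S, x ^ 2 + y ^ 2 + z ^ 2 = S := ⟨_, rfl⟩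
  rw [hS] at hpos
  have ht₁ : hexDefect u < 1 := by linarith
  have hslopes : hexSlope (hexDefect u) (z ^ 2 / S) + hexSlope (hexDefect u) (x ^ 2 / S)
      + hexSlope (hexDefect u) (y ^ 2 / S) ≤ 0 := by
    refine hexSlope_add_add_nonpos ht₀ ht (by positivity) (by positivity) (by positivity) ?_ ?_
    · field_simp
      linarith
    · have hquartic : 2 * (z ^ 4 + x ^ 4 + y ^ 4) = S ^ 2 := by
        obtain rfl : z = -(x + y) := by linarith
        rw [← hS]
        ring
      field_simp
      linarith
  have hK : 0 < (3 - 2 * hexDefect u) / (3 - hexDefect u) := div_pos (by linarith) (by linarith)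
  refine (add_le_add_three
    (deriv_gramForm_rpow_le hs ht₀ ht₁ h hS hpos)
    (deriv_gramForm_rpow_le hs ht₀ ht₁ (z := x) (by linarith) (by linarith) hpos)
    (deriv_gramForm_rpow_le hs ht₀ ht₁ (z := y) (by linarith) (by linarith) hpos)).trans ?_
  rw [← mul_add, ← mul_add]
  exact mul_nonpos_of_nonneg_of_nonpos (by positivity) hslopes

lemma sq_add_sq_pos_of_add_eq_zero {x y z : ℝ} (h : x + y + z = 0)
    (hpos : 0 < x ^ 2 + y ^ 2 + z ^ 2) : 0 < x ^ 2 + y ^ 2 := by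
  obtain rfl : z = -(x + y) := by linarith
  linarith [sq_nonneg (x - y)]

lemma antitoneOn_gramForm_rpow_add_add {s x y z : ℝ} (hs : 3 ≤ s) (h : x + y + z = 0) :
    AntitoneOn (fun u => gramForm u x y ^ (-s) + gramForm u y z ^ (-s) + gramForm u z x ^ (-s))
      (Icc (log (7 / 6)) (log √3)) := by
  have hnonneg : 0 ≤ x ^ 2 + y ^ 2 + z ^ 2 := by positivity
  rcases hnonneg.eq_or_lt with hzero | hpos
  · obtain ⟨rfl, rfl, rfl⟩ : x = 0 ∧ y = 0 ∧ z = 0 := by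
      refine ⟨?_, ?_, ?_⟩ <;> nlinarith
    simpa [gramForm] using antitoneOn_const
  have hderiv : ∀ u, HasDerivAt
      (fun u => gramForm u x y ^ (-s) + gramForm u y z ^ (-s) + gramForm u z x ^ (-s)) _ u :=
    fun u => ((hasDerivAt_gramForm_rpow u (-s) (sq_add_sq_pos_of_add_eq_zero h hpos)).add
      (hasDerivAt_gramForm_rpow u (-s)
        (sq_add_sq_pos_of_add_eq_zero (z := x) (by linarith) (by linarith)))).add
      (hasDerivAt_gramForm_rpow u (-s)
        (sq_add_sq_pos_of_add_eq_zero (z := y) (by linarith) (by linarith)))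
  refine antitoneOn_of_hasDerivWithinAt_nonpos (convex_Icc _ _)
    (fun u _ => (hderiv u).continuousAt.continuousWithinAt)
    (fun u _ => (hderiv u).hasDerivWithinAt) fun u hu => ?_
  have hmem := interior_subset hu
  exact deriv_gramForm_rpow_add_add_nonpos hs (hexDefect_nonneg hmem.2) (hexDefect_le hmem.1) h hpos

lemma antitoneOn_tsum_epsteinTerm_hex {s : ℝ} (hs : 3 ≤ s) :
    AntitoneOn (fun u => ∑' v, epsteinTerm s u v) (Icc (log (7 / 6)) (log √3)) := by
  refine antitoneOn_tsum_of_perm hexRotation three_ne_zero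
    (fun u _ => summable_epsteinTerm (by linarith) u) fun v => ?_
  have hanti := antitoneOn_gramForm_rpow_add_add hs
    (show (v.1 : ℝ) + v.2 + ((-v.1 - v.2 : ℤ) : ℝ) = 0 by push_cast; ring)
  have hcycle : -v.2 - (-v.1 - v.2) = v.1 := by ring
  refine hanti.congr fun u _ => ?_
  simp [Finset.sum_range_succ, epsteinTerm, hexRotation, pow_succ, hcycle]

/-! ### Near the square lattice -/

lemma antitoneOn_add_comp_neg_of_concaveOn {f : ℝ → ℝ} {c : ℝ} (hf : ConcaveOn ℝ (Icc (-c) c) f) :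
    AntitoneOn (fun u => f u + f (-u)) (Icc 0 c) := by
  rintro u ⟨hu, -⟩ w ⟨hw, hwc⟩ huw
  rcases hw.eq_or_lt with rfl | hpos
  · rw [le_antisymm huw hu]
  have hmem : w ∈ Icc (-c) c := ⟨by linarith, hwc⟩
  have hmem' : -w ∈ Icc (-c) c := ⟨by linarith, by linarith⟩
  have hp : 0 ≤ (w + u) / (2 * w) := by positivity
  have hm : 0 ≤ (w - u) / (2 * w) := div_nonneg (by linarith) (by positivity)
  have hone : (w + u) / (2 * w) + (w - u) / (2 * w) = 1 := by
    field_simp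
    ring
  have hright := hf.2 hmem hmem' hp hm hone
  have hleft := hf.2 hmem hmem' hm hp (by rw [add_comm, hone])
  have hu_eq : (w + u) / (2 * w) * w + (w - u) / (2 * w) * (-w) = u := by
    field_simp
    ring
  have hu_neg : (w - u) / (2 * w) * w + (w + u) / (2 * w) * (-w) = -u := by
    field_simp
    ring
  simp only [smul_eq_mul] at hright hleft
  rw [hu_eq] at hright
  rw [hu_neg] at hleft
  linear_combination hright + hleft - (f w + f (-w)) * hone

lemma hasDerivAt_deriv_gramForm_rpow (s u : ℝ) {x y : ℝ} (h : 0 < x ^ 2 + y ^ 2) :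
    HasDerivAt (fun u => gramFormDeriv u x y * (-s) * gramForm u x y ^ (-s - 1))
      (gramForm u x y * (-s) * gramForm u x y ^ (-s - 1) + gramFormDeriv u x y * (-s)
        * (gramFormDeriv u x y * (-s - 1) * gramForm u x y ^ (-s - 1 - 1))) u :=
  ((hasDerivAt_gramFormDeriv u x y).mul_const (-s)).mul (hasDerivAt_gramForm_rpow u (-s - 1) h)

lemma deriv2_gramForm_rpow_le {s : ℝ} (hs : 0 ≤ s) (u : ℝ) {x y : ℝ} (h : 0 < x ^ 2 + y ^ 2) :
    gramForm u x y * (-s) * gramForm u x y ^ (-s - 1) + gramFormDeriv u x y * (-s)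
        * (gramFormDeriv u x y * (-s - 1) * gramForm u x y ^ (-s - 1 - 1))
      ≤ s ^ 2 * gramForm u x y ^ (-s) := by
  have hQ := gramForm_pos u h
  have hsq : gramFormDeriv u x y ^ 2 ≤ gramForm u x y ^ 2 :=
    sq_le_sq' (abs_le.1 (abs_gramFormDeriv_le u x y)).1 (abs_le.1 (abs_gramFormDeriv_le u x y)).2
  have hratio : gramFormDeriv u x y ^ 2 / gramForm u x y ^ 2 ≤ 1 :=
    (div_le_one (by positivity)).2 hsq
  rw [rpow_sub_one hQ.ne' (-s - 1), rpow_sub_one hQ.ne' (-s)]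
  calc _ = s * gramForm u x y ^ (-s)
          * ((s + 1) * (gramFormDeriv u x y ^ 2 / gramForm u x y ^ 2) - 1) := by
        field_simp
        ring
    _ ≤ s * gramForm u x y ^ (-s) * ((s + 1) * 1 - 1) := by gcongr
    _ = s ^ 2 * gramForm u x y ^ (-s) := by ring

lemma concaveOn_gramForm_rpow_sub_sq {s c M x y : ℝ} (hs : 0 ≤ s) (h : 0 < x ^ 2 + y ^ 2)
    (hM : s ^ 2 * (exp (-c) * (x ^ 2 + y ^ 2)) ^ (-s) ≤ M) :
    ConcaveOn ℝ (Icc (-c) c) (fun u => gramForm u x y ^ (-s) - M / 2 * u ^ 2) := by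
  have hderiv : ∀ u, HasDerivAt (fun u => gramForm u x y ^ (-s) - M / 2 * u ^ 2)
      (gramFormDeriv u x y * (-s) * gramForm u x y ^ (-s - 1) - M * u) u := fun u =>
    ((hasDerivAt_gramForm_rpow u (-s) h).sub
      ((hasDerivAt_pow 2 u).const_mul (M / 2))).congr_deriv (by push_cast; ring)
  have hderiv2 := fun u => (hasDerivAt_deriv_gramForm_rpow s u h).sub (hasDerivAt_const_mul M)
  refine concaveOn_of_hasDerivWithinAt2_nonpos (convex_Icc _ _)
    (fun u _ => (hderiv u).continuousAt.continuousWithinAt)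
    (fun u _ => (hderiv u).hasDerivWithinAt) (fun u _ => (hderiv2 u).hasDerivWithinAt)
    fun u hu => sub_nonpos.2 ((deriv2_gramForm_rpow_le hs u h).trans (le_trans ?_ hM))
  have hmem : u ∈ Icc (-c) c := interior_subset hu
  have habs : |u| ≤ c := abs_le.2 hmem
  exact mul_le_mul_of_nonneg_left (rpow_le_rpow_of_nonpos (by positivity)
    (exp_neg_mul_le_gramForm habs x y) (by linarith)) (sq_nonneg s)

lemma antitoneOn_cosh_rpow_add_sq {s : ℝ} (hs : 0 ≤ s) (c : ℝ) :
    AntitoneOn (fun u => cosh u ^ (-s) + s * cosh c ^ (-s - 1) / 2 * u ^ 2) (Icc 0 c) := by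
  have hderiv : ∀ u, HasDerivAt (fun u => cosh u ^ (-s) + s * cosh c ^ (-s - 1) / 2 * u ^ 2)
      (sinh u * (-s) * cosh u ^ (-s - 1) + s * cosh c ^ (-s - 1) * u) u := fun u =>
    (((hasDerivAt_cosh u).rpow_const (Or.inl (cosh_pos u).ne')).add
      ((hasDerivAt_pow 2 u).const_mul (s * cosh c ^ (-s - 1) / 2))).congr_deriv
      (by push_cast; ring)
  refine antitoneOn_of_hasDerivWithinAt_nonpos (convex_Icc _ _)
    (fun u _ => (hderiv u).continuousAt.continuousWithinAt)
    (fun u _ => (hderiv u).hasDerivWithinAt) fun u hu => ?_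
  obtain ⟨hu₀, huc⟩ := interior_subset hu
  have hsinh : u ≤ sinh u := self_le_sinh_iff.2 hu₀
  have hcosh : cosh c ^ (-s - 1) ≤ cosh u ^ (-s - 1) :=
    rpow_le_rpow_of_nonpos (cosh_pos u)
      (cosh_le_cosh.2 (by rwa [abs_of_nonneg hu₀, abs_of_nonneg (hu₀.trans huc)])) (by linarith)
  have hmul := mul_le_mul hsinh hcosh (rpow_nonneg (cosh_pos c).le _) (hu₀.trans hsinh)
  linear_combination s * hmul

lemma mul_rpow_le_mul_rpow_self {a s r : ℝ} (ha : 0 < a) (has : a ≤ s) (hr : 0 < r)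
    (hexp : r ≤ exp (-1 / a)) : s * r ^ s ≤ a * r ^ a := by
  have hs : s ≤ a * exp (s / a - 1) := by
    rw [mul_comm, ← div_le_iff₀ ha]
    linarith [add_one_le_exp (s / a - 1)]
  have hdecay : r ^ (s - a) ≤ exp (-(s / a - 1)) := by
    calc r ^ (s - a) ≤ exp (-1 / a) ^ (s - a) := rpow_le_rpow hr.le hexp (by linarith)
      _ = exp (-(s / a - 1)) := by
        rw [← exp_mul]
        field_simp
  calc s * r ^ s = s * r ^ (s - a) * r ^ a := by rw [mul_assoc, ← rpow_add hr, sub_add_cancel]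
    _ ≤ a * exp (s / a - 1) * exp (-(s / a - 1)) * r ^ a := by gcongr
    _ = a * r ^ a := by rw [mul_assoc a, ← exp_add, add_neg_cancel, exp_zero, mul_one]

lemma cosh_log_seven_div_six : cosh (log (7 / 6)) = 85 / 84 := by
  rw [cosh_log (by norm_num)]
  norm_num

/-- The four shortest vectors of the square lattice. -/
def unitVectors : Finset (ℤ × ℤ) := {(1, 0), (-1, 0), (0, 1), (0, -1)}

/-- The weight of the lattice point `v` in the second order estimate near the square lattice, in
units of `s * cosh c ^ (-s - 1)`: the decrease granted by a unit vector, and minus the increase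
conceded to a point off the axes. As `1 / 0 = 0`, the second part is zero on the axes. The constant
`16 / 25 = 4 / (5 / 2) ^ 2` keeps the total weight nonnegative. -/
noncomputable def squareWeight (v : ℤ × ℤ) : ℝ :=
  (if v ∈ unitVectors then 1 else 0)
    - 16 / 25 * (1 / |(v.1 : ℝ)| ^ 3 * (1 / |(v.2 : ℝ)| ^ 3))

lemma squareWeight_neg_snd (v : ℤ × ℤ) : squareWeight (v.1, -v.2) = squareWeight v := by
  have hmem : (v.1, -v.2) ∈ unitVectors ↔ v ∈ unitVectors := by
    simp only [unitVectors, Finset.mem_insert, Finset.mem_singleton, Prod.ext_iff]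
    omega
  simp only [squareWeight, hmem, Int.cast_neg, abs_neg]

lemma mul_rpow_le_of_off_axis {s x y : ℝ} (hs : 3 ≤ s) (hx : 1 ≤ |x|) (hy : 1 ≤ |y|) :
    s ^ 2 * (exp (-log (7 / 6)) * (x ^ 2 + y ^ 2)) ^ (-s)
      ≤ s * (85 / 84) ^ (-s - 1) * (16 / 25 * (1 / |x| ^ 3 * (1 / |y| ^ 3))) := by
  have hP : 1 ≤ |x| * |y| := one_le_mul_of_one_le_of_one_le hx hy
  have hn : 2 * (|x| * |y|) ≤ x ^ 2 + y ^ 2 := by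
    rw [← sq_abs x, ← sq_abs y]
    linarith [sq_nonneg (|x| - |y|)]
  obtain ⟨P, hPdef⟩ : ∃ P, |x| * |y| = P := ⟨_, rfl⟩
  rw [hPdef] at hP hn
  have hexp : 85 / 144 / P ≤ exp (-1 / 3) := by
    calc 85 / 144 / P ≤ 85 / 144 := div_le_self (by norm_num) hP
      _ ≤ -1 / 3 + 1 := by norm_num
      _ ≤ exp (-1 / 3) := add_one_le_exp _
  have hdecay := mul_rpow_le_mul_rpow_self three_pos hs (by positivity) hexp
  have hbase : 85 / 84 * (85 / 144 / P)⁻¹ ≤ 6 / 7 * (x ^ 2 + y ^ 2) := by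
    field_simp
    linarith
  rw [exp_neg, exp_log (by norm_num), inv_div]
  calc s ^ 2 * (6 / 7 * (x ^ 2 + y ^ 2)) ^ (-s)
      ≤ s ^ 2 * (85 / 84 * (85 / 144 / P)⁻¹) ^ (-s) :=
        mul_le_mul_of_nonneg_left
          (rpow_le_rpow_of_nonpos (by positivity) hbase (by linarith)) (by positivity)
    _ = s * (85 / 84) ^ (-s - 1) * (85 / 84 * (s * (85 / 144 / P) ^ s)) := by
        rw [mul_rpow (by norm_num) (by positivity), ← rpow_neg_eq_inv_rpow, neg_neg,
          rpow_sub_one (by norm_num)]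
        ring
    _ ≤ s * (85 / 84) ^ (-s - 1) * (85 / 84 * (3 * (85 / 144 / P) ^ (3 : ℝ))) := by gcongr
    _ = s * (85 / 84) ^ (-s - 1) * (85 / 84 * (3 * (85 / 144) ^ 3) * (1 / P ^ 3)) := by
        rw [rpow_ofNat, div_pow]
        ring
    _ ≤ s * (85 / 84) ^ (-s - 1) * (16 / 25 * (1 / P ^ 3)) := by
        gcongr
        norm_num
    _ = _ := by rw [← hPdef, mul_pow, one_div_mul_one_div]

lemma antitoneOn_epsteinTerm_off_axis {s : ℝ} (hs : 3 ≤ s) {v : ℤ × ℤ} (hx : v.1 ≠ 0)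
    (hy : v.2 ≠ 0) :
    AntitoneOn (fun u => epsteinTerm s u v + epsteinTerm s (-u) v
      + s * (85 / 84) ^ (-s - 1) * squareWeight v * u ^ 2) (Icc 0 (log (7 / 6))) := by
  have hunit : v ∉ unitVectors := by
    simp only [unitVectors, Finset.mem_insert, Finset.mem_singleton, Prod.ext_iff]
    omega
  have habs : ∀ n : ℤ, n ≠ 0 → 1 ≤ |(n : ℝ)| := fun n hn => by
    exact_mod_cast Int.one_le_abs hn
  refine (antitoneOn_add_comp_neg_of_concaveOn (concaveOn_gramForm_rpow_sub_sq (by linarith)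
    (sq_add_sq_pos fun h => hx (by rw [h]; rfl))
    (mul_rpow_le_of_off_axis hs (habs _ hx) (habs _ hy)))).congr fun u _ => ?_
  simp only [epsteinTerm, squareWeight, if_neg hunit]
  ring

lemma antitoneOn_epsteinTerm_axis {s : ℝ} (hs : 0 ≤ s) {v : ℤ × ℤ} (hv : v ≠ 0)
    (haxis : v.1 = 0 ∨ v.2 = 0) :
    AntitoneOn (fun u => epsteinTerm s u v + epsteinTerm s (-u) v
      + s * (85 / 84) ^ (-s - 1) * squareWeight v * u ^ 2) (Icc 0 (log (7 / 6))) := by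
  obtain ⟨N, hN⟩ : ∃ N, (v.1 : ℝ) ^ 2 + (v.2 : ℝ) ^ 2 = N := ⟨_, rfl⟩
  have hNpos : 0 < N := hN ▸ sq_add_sq_pos hv
  have hprod : (v.1 : ℝ) * v.2 = 0 := by
    rcases haxis with h | h <;> simp [h]
  have hterm : ∀ u, epsteinTerm s u v = N ^ (-s) * cosh u ^ (-s) := fun u => by
    rw [epsteinTerm, gramForm, mul_assoc 2, hprod, hN, ← mul_rpow hNpos.le (cosh_pos u).le]
    ring_nf
  have hweight : squareWeight v = if v ∈ unitVectors then 1 else 0 := by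
    rw [squareWeight]
    rcases haxis with h | h <;> simp [h]
  have hle : squareWeight v ≤ N ^ (-s) := by
    rw [hweight]
    split_ifs with h
    · have hone : N = 1 := by
        simp only [unitVectors, Finset.mem_insert, Finset.mem_singleton] at h
        rcases h with rfl | rfl | rfl | rfl <;> norm_num [← hN]
      rw [hone, one_rpow]
    · positivity
  have hcosh := antitoneOn_cosh_rpow_add_sq hs (log (7 / 6))
  rw [cosh_log_seven_div_six] at hcosh
  have hsq : AntitoneOn (fun u : ℝ => -(s * (85 / 84) ^ (-s - 1) * (N ^ (-s) - squareWeight v)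
      * u ^ 2)) (Icc 0 (log (7 / 6))) := fun u hu w _ huw =>
    neg_le_neg (mul_le_mul_of_nonneg_left (pow_le_pow_left₀ hu.1 huw 2)
      (mul_nonneg (by positivity) (sub_nonneg.2 hle)))
  refine (((monotone_mul_left_of_nonneg (by positivity : 0 ≤ 2 * N ^ (-s))).comp_antitoneOn
    hcosh).add hsq).congr fun u _ => ?_
  simp only [hterm, cosh_neg, Function.comp_apply]
  ring

lemma antitoneOn_epsteinTerm_add_neg {s : ℝ} (hs : 3 ≤ s) (v : ℤ × ℤ) :
    AntitoneOn (fun u => epsteinTerm s u v + epsteinTerm s (-u) v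
      + s * (85 / 84) ^ (-s - 1) * squareWeight v * u ^ 2) (Icc 0 (log (7 / 6))) := by
  rcases eq_or_ne v 0 with rfl | hv
  · have hweight : squareWeight 0 = 0 := by
      simp [squareWeight, unitVectors, Prod.ext_iff]
    simpa [epsteinTerm_zero (by linarith : s ≠ 0), hweight] using antitoneOn_const
  by_cases haxis : v.1 = 0 ∨ v.2 = 0
  · exact antitoneOn_epsteinTerm_axis (by linarith) hv haxis
  · push Not at haxis
    exact antitoneOn_epsteinTerm_off_axis hs haxis.1 haxis.2

lemma summable_one_div_abs_cube : Summable fun n : ℤ => 1 / |(n : ℝ)| ^ 3 := by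
  simpa only [one_div, abs_pow, abs_inv] using
    (summable_one_div_int_pow.2 (by norm_num : 1 < 3)).abs

-- The telescoping bound follows from `1 / (n + 1) ^ 3 ≤ b n - b (n + 1)` with
-- `b n = 5 / (10 n (n + 1) + 4)`, chosen so that `b 0 = 5 / 4`.
lemma sum_range_one_div_cube_le (N : ℕ) :
    ∑ n ∈ Finset.range N, 1 / ((n : ℝ) + 1) ^ 3 ≤ 5 / 4 - 5 / (10 * (N : ℝ) * (N + 1) + 4) := by
  induction N with
  | zero => norm_num
  | succ N ih =>
    have hstep : 1 / ((N : ℝ) + 1) ^ 3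
        ≤ 5 / (10 * N * (N + 1) + 4) - 5 / (10 * (N + 1) * (N + 1 + 1) + 4) := by
      rw [div_sub_div _ _ (by positivity) (by positivity),
        div_le_div_iff₀ (by positivity) (by positivity)]
      ring_nf
      nlinarith [N.cast_nonneg (α := ℝ)]
    rw [Finset.sum_range_succ, Nat.cast_succ]
    linarith

lemma tsum_one_div_abs_cube_le : ∑' n : ℤ, 1 / |(n : ℝ)| ^ 3 ≤ 5 / 2 := by
  have hnat : ∑' n : ℕ, 1 / ((n : ℝ) + 1) ^ 3 ≤ 5 / 4 :=
    Real.tsum_le_of_sum_range_le (fun n => by positivity) fun N =>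
      (sum_range_one_div_cube_le N).trans (sub_le_self _ (by positivity))
  have hpnat : ∑' n : ℕ+, 1 / |((n : ℤ) : ℝ)| ^ 3 = ∑' n : ℕ, 1 / ((n : ℝ) + 1) ^ 3 := by
    rw [tsum_pnat_eq_tsum_succ (f := fun n : ℕ => 1 / |((n : ℤ) : ℝ)| ^ 3)]
    refine tsum_congr fun n => ?_
    rw [abs_of_nonneg (by positivity)]
    push_cast
    rfl
  rw [tsum_int_eq_zero_add_two_mul_tsum_pnat (fun n => by simp) summable_one_div_abs_cube, hpnat,
    Int.cast_zero, abs_zero, zero_pow three_ne_zero, div_zero, zero_add, two_nsmul]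
  linarith

lemma hasSum_squareWeight :
    HasSum squareWeight (4 - 16 / 25 * (∑' n : ℤ, 1 / |(n : ℝ)| ^ 3) ^ 2) := by
  have hunit : HasSum (fun v : ℤ × ℤ => if v ∈ unitVectors then (1 : ℝ) else 0) 4 := by
    have hcard : ∑ v ∈ unitVectors, (if v ∈ unitVectors then (1 : ℝ) else 0) = 4 := by
      rw [Finset.sum_ite_mem, Finset.inter_self, Finset.sum_const, nsmul_one]
      rfl
    exact hcard ▸ hasSum_sum_of_ne_finset_zero fun v hv => if_neg hv
  have hcube := summable_one_div_abs_cube.hasSum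
  rw [sq]
  exact hunit.sub ((hcube.mul hcube (summable_one_div_abs_cube.mul_of_nonneg
    summable_one_div_abs_cube (fun n => by positivity) (fun n => by positivity))).mul_left _)

lemma antitoneOn_tsum_epsteinTerm_square {s : ℝ} (hs : 3 ≤ s) :
    AntitoneOn (fun u => ∑' v, epsteinTerm s u v) (Icc 0 (log (7 / 6))) := by
  set k := s * (85 / 84) ^ (-s - 1) / 2
  have hsum := fun u => summable_epsteinTerm (by linarith : 1 < s) u
  have hweight : ∀ u : ℝ, Summable fun v => k * squareWeight v * u ^ 2 := fun u =>
    (hasSum_squareWeight.summable.mul_left k).mul_right (u ^ 2)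
  have hanti : AntitoneOn (fun u => ∑' v, (epsteinTerm s u v + k * squareWeight v * u ^ 2))
      (Icc 0 (log (7 / 6))) := by
    refine antitoneOn_tsum_of_perm (Equiv.prodCongr (Equiv.refl ℤ) (Equiv.neg ℤ)) two_ne_zero
      (fun u _ => (hsum u).add (hweight u)) fun v => ?_
    refine (antitoneOn_epsteinTerm_add_neg hs v).congr fun u _ => ?_
    have hreflect : epsteinTerm s u (v.1, -v.2) = epsteinTerm s (-u) v := by
      simp only [epsteinTerm, Int.cast_neg, gramForm_neg_right]
    simp only [Finset.sum_range_succ, Finset.sum_range_zero, pow_zero, pow_one,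
      Equiv.Perm.one_apply, Equiv.prodCongr_apply, Prod.map_apply', Equiv.refl_apply,
      Equiv.neg_apply, hreflect, squareWeight_neg_snd]
    ring
  have hnonneg : 0 ≤ ∑' v, squareWeight v := by
    rw [hasSum_squareWeight.tsum_eq]
    have hcube : 0 ≤ ∑' n : ℤ, 1 / |(n : ℝ)| ^ 3 := tsum_nonneg fun n => by positivity
    nlinarith [tsum_one_div_abs_cube_le]
  intro u hu w hw huw
  have hle := hanti hu hw huw
  simp only [(hsum _).tsum_add (hweight _), tsum_mul_left, tsum_mul_right] at hle
  have hsq : k * (∑' v, squareWeight v) * u ^ 2 ≤ k * (∑' v, squareWeight v) * w ^ 2 :=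
    mul_le_mul_of_nonneg_left (pow_le_pow_left₀ hu.1 huw 2) (by positivity)
  linarith

lemma antitoneOn_tsum_epsteinTerm {s : ℝ} (hs : 3 ≤ s) :
    AntitoneOn (fun u => ∑' v, epsteinTerm s u v) (Icc 0 (log √3)) := by
  have hlow : (0 : ℝ) ≤ log (7 / 6) := log_nonneg (by norm_num)
  have hhigh : log (7 / 6) ≤ log √3 :=
    log_le_log (by norm_num) (le_sqrt_of_sq_le (by norm_num))
  rw [← Icc_union_Icc_eq_Icc hlow hhigh]
  exact (antitoneOn_tsum_epsteinTerm_square hs).union_right (antitoneOn_tsum_epsteinTerm_hex hs)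
    (isGreatest_Icc hlow) (isLeast_Icc hhigh)

/-! ### The minimal norm as parameter -/

lemma epstein_summand_eq {Δ T : ℝ} (hΔ : 0 < Δ) (hT : Δ ≤ T) (s : ℝ) (v : ℤ × ℤ) :
    (T * (v.1 : ℝ) ^ 2 + T * (v.2 : ℝ) ^ 2 + 2 * (v.1 : ℝ) * (v.2 : ℝ) * √(T ^ 2 - Δ ^ 2)) ^ (-s)
      = Δ ^ (-s) * epsteinTerm s (arcosh (T / Δ)) v := by
  have hone : 1 ≤ T / Δ := (one_le_div hΔ).2 hT
  have hsqrt : √(T ^ 2 - Δ ^ 2) = Δ * √((T / Δ) ^ 2 - 1) := by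
    rw [← sqrt_sq hΔ.le, ← sqrt_mul (sq_nonneg Δ), sqrt_sq hΔ.le]
    field_simp
  rw [epsteinTerm, ← mul_rpow hΔ.le (gramForm_nonneg _ _ _), gramForm, cosh_arcosh hone,
    sinh_arcosh hone, hsqrt]
  field_simp

lemma summable_epstein_summand {Δ s T : ℝ} (hΔ : 0 < Δ) (hs : 1 < s) (hT : Δ ≤ T) :
    Summable fun v : ℤ × ℤ => (T * (v.1 : ℝ) ^ 2 + T * (v.2 : ℝ) ^ 2
      + 2 * (v.1 : ℝ) * (v.2 : ℝ) * √(T ^ 2 - Δ ^ 2)) ^ (-s) := by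
  simp only [epstein_summand_eq hΔ hT]
  exact (summable_epsteinTerm hs _).mul_left _

lemma epstein_eq_tsum_epsteinTerm {Δ s T : ℝ} (hΔ : 0 < Δ) (hs : s ≠ 0) (hT : Δ ≤ T) :
    epstein Δ s T = Δ ^ (-s) * ∑' v, epsteinTerm s (arcosh (T / Δ)) v := by
  simp only [epstein, epstein_summand_eq hΔ hT, tsum_mul_left]
  congr 1
  refine tsum_subtype_eq_of_support_subset (s := {v | v ≠ 0}) fun v hv hzero => hv ?_
  rw [hzero, epsteinTerm_zero hs]

lemma arcosh_two_div_sqrt_three : arcosh (2 / √3) = log √3 := by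
  have hcosh : cosh (log √3) = 2 / √3 := by
    rw [cosh_log (by positivity)]
    field_simp
    norm_num
  rw [← hcosh, arcosh_cosh (log_nonneg (one_le_sqrt.2 (by norm_num)))]

lemma antitoneOn_epstein {Δ s : ℝ} (hΔ : 0 < Δ) (hs : 3 ≤ s) :
    AntitoneOn (epstein Δ s) (Icc Δ (2 * Δ / √3)) := by
  have hmem : ∀ T ∈ Icc Δ (2 * Δ / √3), arcosh (T / Δ) ∈ Icc 0 (log √3) := by
    rintro T ⟨hT, hT'⟩
    refine ⟨arcosh_nonneg ((one_le_div hΔ).2 hT), ?_⟩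
    rw [← arcosh_two_div_sqrt_three, arcosh_le_arcosh (div_pos (hΔ.trans_le hT) hΔ) (by positivity),
      div_le_iff₀ hΔ, div_mul_eq_mul_div]
    exact hT'
  intro T hT T' hT' hle
  rw [epstein_eq_tsum_epsteinTerm hΔ (by linarith) hT.1,
    epstein_eq_tsum_epsteinTerm hΔ (by linarith) hT'.1]
  refine mul_le_mul_of_nonneg_left
    (antitoneOn_tsum_epsteinTerm hs (hmem T hT) (hmem T' hT') ?_) (by positivity)
  rw [arcosh_le_arcosh (div_pos (hΔ.trans_le hT.1) hΔ) (div_pos (hΔ.trans_le hT'.1) hΔ)]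
  gcongr

/-- Lemma 3.1: for fixed determinant `Δ` and fixed real `s ≥ 3`, the Epstein
zeta function of a well-rounded planar lattice is a decreasing function of its
minimal norm `T ∈ [Δ, 2Δ/√3]` (and the defining series converges). -/
theorem stmt10 (Δ s : ℝ) (hΔ : 0 < Δ) (hs : 3 ≤ s) :
    (∀ T : ℝ, Δ ≤ T → T ≤ 2 * Δ / Real.sqrt 3 →
      Summable (fun xy : {v : ℤ × ℤ // v ≠ 0} =>
        (T * ((xy : ℤ × ℤ).1 : ℝ) ^ 2 + T * ((xy : ℤ × ℤ).2 : ℝ) ^ 2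
          + 2 * ((xy : ℤ × ℤ).1 : ℝ) * ((xy : ℤ × ℤ).2 : ℝ)
            * Real.sqrt (T ^ 2 - Δ ^ 2)) ^ (-s))) ∧
    (∀ T₁ T₂ : ℝ, Δ ≤ T₁ → T₁ ≤ T₂ → T₂ ≤ 2 * Δ / Real.sqrt 3 →
      epstein Δ s T₂ ≤ epstein Δ s T₁) :=
  ⟨fun _ hT _ => (summable_epstein_summand hΔ (by linarith) hT).subtype _,
    fun _ _ h₁ h₁₂ h₂ =>
      antitoneOn_epstein hΔ hs ⟨h₁, h₁₂.trans h₂⟩ ⟨h₁.trans h₁₂, h₂⟩ h₁₂⟩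
end

section
/- For every real number s > 1 there exist positive real constants C₁(s) and C₂(s), depending only on s, such that for all real Δ > 0 and all real T with Δ ≤ T ≤ 2Δ/√3, one has C₁(s)/T^s ≤ Σ_{(x,y) ∈ ℤ² ∖ {(0,0)}} (T x² + T y² + 2 x y √(T² − Δ²))^{−s} ≤ C₂(s)/T^s (in particular the series converges). -/
/-!
Let `b` be the inner product of the two basis vectors, both of squared length `T`. If `|b| ≤ ρ T`
with `ρ < 1`, then the form is at least `(1 - ρ) T ‖v‖²` for the sup norm on `ℤ × ℤ`. Comparing the
zeta functions term by term gives the upper bound with `C₂ = (1 - ρ)^(-s) ∑ ‖v‖^(-2s)`. The vector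
`(1, 0)` alone contributes `T^(-s)`, so `C₁ = 1` works. For well-rounded lattices
`b = √(T² - Δ²)`, and `T ≤ 2Δ/√3` says precisely that `b ≤ T/2`.
-/

/-- The Epstein zeta function `∑_{v ≠ 0} q(v)^(-s)` of a form `q` at a real exponent. The domain is
any type with a zero; the sum has the junk value `0` when it diverges, so summability is always
stated separately. -/
noncomputable def epsteinZeta {M : Type*} [Zero M] (q : M → ℝ) (s : ℝ) : ℝ :=
  ∑' v : {v : M // v ≠ 0}, q v ^ (-s)

section Comparison

variable {M : Type*} [Zero M] {p q : M → ℝ} {c s : ℝ}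

lemma rpow_neg_le_of_mul_le {a b : ℝ} (hs : 0 ≤ s) (hc : 0 < c) (ha : 0 < a) (hab : c * a ≤ b) :
    b ^ (-s) ≤ c ^ (-s) * a ^ (-s) := by
  rw [← Real.mul_rpow hc.le ha.le]
  exact Real.rpow_le_rpow_of_nonpos (mul_pos hc ha) hab (neg_nonpos.mpr hs)

lemma summable_rpow_neg_of_mul_le (hs : 0 ≤ s) (hc : 0 < c) (hp : ∀ v ≠ 0, 0 < p v)
    (hpq : ∀ v ≠ 0, c * p v ≤ q v) (hsum : Summable fun v : {v : M // v ≠ 0} => p v ^ (-s)) :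
    Summable fun v : {v : M // v ≠ 0} => q v ^ (-s) :=
  .of_nonneg_of_le
    (fun v => Real.rpow_nonneg ((mul_pos hc (hp v v.2)).le.trans (hpq v v.2)) _)
    (fun v => rpow_neg_le_of_mul_le hs hc (hp v v.2) (hpq v v.2)) (hsum.mul_left _)

lemma epsteinZeta_le_of_mul_le (hs : 0 ≤ s) (hc : 0 < c) (hp : ∀ v ≠ 0, 0 < p v)
    (hpq : ∀ v ≠ 0, c * p v ≤ q v) (hsum : Summable fun v : {v : M // v ≠ 0} => p v ^ (-s)) :
    epsteinZeta q s ≤ c ^ (-s) * epsteinZeta p s := by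
  rw [epsteinZeta, epsteinZeta, ← tsum_mul_left]
  exact (summable_rpow_neg_of_mul_le hs hc hp hpq hsum).tsum_le_tsum
    (fun v => rpow_neg_le_of_mul_le hs hc (hp v v.2) (hpq v v.2)) (hsum.mul_left _)

lemma rpow_neg_le_epsteinZeta (hq : ∀ v ≠ 0, 0 ≤ q v)
    (hsum : Summable fun v : {v : M // v ≠ 0} => q v ^ (-s)) {v : M} (hv : v ≠ 0) :
    q v ^ (-s) ≤ epsteinZeta q s :=
  hsum.le_tsum ⟨v, hv⟩ fun w _ => Real.rpow_nonneg (hq w w.2) _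

end Comparison

lemma summable_int_prod_norm_rpow {r : ℝ} (hr : r < -2) :
    Summable fun v : ℤ × ℤ => ‖v‖ ^ r := by
  let e : (Fin 2 → ℤ) ≃ᵢ ℤ × ℤ := IsometryEquiv.piFinTwo fun _ => ℤ
  have norm_e (x : Fin 2 → ℤ) : ‖e x‖ = ‖x‖ := e.isometry.norm_map_of_map_zero rfl x
  rw [← e.toEquiv.summable_iff]
  simpa [Function.comp_def, norm_e] using
    EisensteinSeries.summable_one_div_norm_rpow (k := -r) (by linarith)

lemma summable_int_prod_norm_sq_rpow_neg {s : ℝ} (hs : 1 < s) :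
    Summable fun v : ℤ × ℤ => (‖v‖ ^ 2) ^ (-s) := by
  refine (summable_int_prod_norm_rpow (r := 2 * -s) (by linarith)).congr fun v => ?_
  rw [Real.rpow_mul (norm_nonneg v), Real.rpow_two]

lemma norm_sq_pos_of_ne_zero {E : Type*} [NormedAddGroup E] (v : E) (hv : v ≠ 0) : 0 < ‖v‖ ^ 2 :=
  pow_pos (norm_pos_iff.mpr hv) 2

lemma epsteinZeta_int_prod_norm_sq_pos {s : ℝ} (hs : 1 < s) :
    0 < epsteinZeta (fun v : ℤ × ℤ => ‖v‖ ^ 2) s :=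
  have e₁_ne : ((1, 0) : ℤ × ℤ) ≠ 0 := by simp
  (Real.rpow_pos_of_pos (norm_sq_pos_of_ne_zero _ e₁_ne) _).trans_le <|
    rpow_neg_le_epsteinZeta (fun v hv => (norm_sq_pos_of_ne_zero v hv).le)
      ((summable_int_prod_norm_sq_rpow_neg hs).subtype _) e₁_ne

lemma prod_norm_sq_le_add_sq {E F : Type*} [SeminormedAddGroup E] [SeminormedAddGroup F]
    (v : E × F) : ‖v‖ ^ 2 ≤ ‖v.1‖ ^ 2 + ‖v.2‖ ^ 2 := by
  rw [Prod.norm_def]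
  rcases max_choice ‖v.1‖ ‖v.2‖ with h | h <;> rw [h]
  · exact le_add_of_nonneg_right (sq_nonneg _)
  · exact le_add_of_nonneg_left (sq_nonneg _)

/-- The quadratic form `‖x e₁ + y e₂‖²` of a planar lattice basis with `‖e₁‖² = ‖e₂‖² = T` and
`⟪e₁, e₂⟫ = b`, in the integer coordinates `v = (x, y)`. -/
def equalNormForm (T b : ℝ) (v : ℤ × ℤ) : ℝ :=
  T * (v.1 : ℝ) ^ 2 + T * (v.2 : ℝ) ^ 2 + 2 * (v.1 : ℝ) * (v.2 : ℝ) * b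

namespace equalNormForm

variable {T b ρ : ℝ}

lemma sub_abs_mul_le (T b : ℝ) (v : ℤ × ℤ) :
    (T - |b|) * ((v.1 : ℝ) ^ 2 + (v.2 : ℝ) ^ 2) ≤ equalNormForm T b v := by
  obtain ⟨x, y⟩ := v
  have amgm : |2 * (x : ℝ) * y| ≤ (x : ℝ) ^ 2 + (y : ℝ) ^ 2 :=
    abs_le.mpr ⟨by linarith [sq_nonneg ((x : ℝ) + y)], two_mul_le_add_sq _ _⟩
  have cross : -(((x : ℝ) ^ 2 + (y : ℝ) ^ 2) * |b|) ≤ 2 * (x : ℝ) * y * b :=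
    calc -(((x : ℝ) ^ 2 + (y : ℝ) ^ 2) * |b|)
        ≤ -(|2 * (x : ℝ) * y| * |b|) := by gcongr
      _ = -|2 * (x : ℝ) * y * b| := by rw [← abs_mul]
      _ ≤ 2 * (x : ℝ) * y * b := neg_abs_le _
  simp only [equalNormForm]
  linarith

lemma mul_norm_sq_le (hb : |b| ≤ ρ * T) (hT : 0 ≤ T) (hρ : ρ ≤ 1) (v : ℤ × ℤ) :
    (1 - ρ) * T * ‖v‖ ^ 2 ≤ equalNormForm T b v := by
  have : 0 ≤ (1 - ρ) * T := mul_nonneg (sub_nonneg.mpr hρ) hT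
  calc (1 - ρ) * T * ‖v‖ ^ 2
      ≤ (1 - ρ) * T * ((v.1 : ℝ) ^ 2 + (v.2 : ℝ) ^ 2) := by
        gcongr
        simpa [Int.norm_eq_abs] using prod_norm_sq_le_add_sq v
    _ ≤ (T - |b|) * ((v.1 : ℝ) ^ 2 + (v.2 : ℝ) ^ 2) := by
        gcongr
        linarith
    _ ≤ equalNormForm T b v := sub_abs_mul_le T b v

variable {s : ℝ}

lemma summable_rpow_neg (hs : 1 < s) (hρ : ρ < 1) (hT : 0 < T) (hb : |b| ≤ ρ * T) :
    Summable fun v : {v : ℤ × ℤ // v ≠ 0} => equalNormForm T b v ^ (-s) :=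
  summable_rpow_neg_of_mul_le (zero_le_one.trans hs.le) (mul_pos (sub_pos.mpr hρ) hT)
    norm_sq_pos_of_ne_zero (fun v _ => mul_norm_sq_le hb hT.le hρ.le v)
    ((summable_int_prod_norm_sq_rpow_neg hs).subtype _)

lemma one_div_rpow_le_epsteinZeta (hs : 1 < s) (hρ : ρ < 1) (hT : 0 < T) (hb : |b| ≤ ρ * T) :
    1 / T ^ s ≤ epsteinZeta (equalNormForm T b) s := by
  have form_nonneg (v : ℤ × ℤ) (_ : v ≠ 0) : 0 ≤ equalNormForm T b v :=
    (mul_nonneg (mul_pos (sub_pos.mpr hρ) hT).le (sq_nonneg _)).trans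
      (mul_norm_sq_le hb hT.le hρ.le v)
  have e₁_ne : ((1, 0) : ℤ × ℤ) ≠ 0 := by simp
  simpa [equalNormForm, Real.rpow_neg hT.le] using
    rpow_neg_le_epsteinZeta form_nonneg (summable_rpow_neg hs hρ hT hb) e₁_ne

lemma epsteinZeta_le (hs : 1 < s) (hρ : ρ < 1) (hT : 0 < T) (hb : |b| ≤ ρ * T) :
    epsteinZeta (equalNormForm T b) s ≤
      (1 - ρ) ^ (-s) * epsteinZeta (fun v : ℤ × ℤ => ‖v‖ ^ 2) s / T ^ s := by
  have hρ' : 0 < 1 - ρ := sub_pos.mpr hρ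
  calc epsteinZeta (equalNormForm T b) s
      ≤ ((1 - ρ) * T) ^ (-s) * epsteinZeta (fun v : ℤ × ℤ => ‖v‖ ^ 2) s :=
        epsteinZeta_le_of_mul_le (zero_le_one.trans hs.le) (mul_pos hρ' hT)
          norm_sq_pos_of_ne_zero (fun v _ => mul_norm_sq_le hb hT.le hρ.le v)
          ((summable_int_prod_norm_sq_rpow_neg hs).subtype _)
    _ = (1 - ρ) ^ (-s) * epsteinZeta (fun v : ℤ × ℤ => ‖v‖ ^ 2) s / T ^ s := by
        rw [Real.mul_rpow hρ'.le hT.le, Real.rpow_neg hT.le]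
        ring

end equalNormForm

lemma abs_sqrt_sq_sub_sq_le_half {Δ T : ℝ} (hT : 0 ≤ T) (hTΔ : T ≤ 2 * Δ / √3) :
    |√(T ^ 2 - Δ ^ 2)| ≤ 1 / 2 * T := by
  have hTΔ' : T * √3 ≤ 2 * Δ := (le_div_iff₀ (by positivity)).mp hTΔ
  have hsq : T ^ 2 * 3 ≤ 4 * Δ ^ 2 :=
    calc T ^ 2 * 3 = (T * √3) ^ 2 := by rw [mul_pow, Real.sq_sqrt (by norm_num)]
      _ ≤ (2 * Δ) ^ 2 := by gcongr
      _ = 4 * Δ ^ 2 := by ring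
  rw [abs_of_nonneg (Real.sqrt_nonneg _)]
  exact Real.sqrt_le_iff.mpr ⟨by positivity, by linarith⟩

theorem stmt11_general {s ρ : ℝ} (hs : 1 < s) (hρ : ρ < 1) :
    ∃ C₁ C₂ : ℝ, 0 < C₁ ∧ 0 < C₂ ∧ ∀ T b : ℝ, 0 < T → |b| ≤ ρ * T →
      Summable (fun v : {v : ℤ × ℤ // v ≠ 0} => equalNormForm T b v ^ (-s)) ∧
      C₁ / T ^ s ≤ epsteinZeta (equalNormForm T b) s ∧
      epsteinZeta (equalNormForm T b) s ≤ C₂ / T ^ s := by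
  refine ⟨1, (1 - ρ) ^ (-s) * epsteinZeta (fun v : ℤ × ℤ => ‖v‖ ^ 2) s, one_pos,
    mul_pos (Real.rpow_pos_of_pos (sub_pos.mpr hρ) _) (epsteinZeta_int_prod_norm_sq_pos hs), ?_⟩
  exact fun T b hT hb => ⟨equalNormForm.summable_rpow_neg hs hρ hT hb,
    equalNormForm.one_div_rpow_le_epsteinZeta hs hρ hT hb,
    equalNormForm.epsteinZeta_le hs hρ hT hb⟩

/-- Lemma 3.2: for every real `s > 1` there are positive constants `C₁(s), C₂(s)`
such that for every well-rounded planar lattice of determinant `Δ` and minimal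
norm `T ∈ [Δ, 2Δ/√3]`, the Epstein zeta function satisfies
`C₁/T^s ≤ E_Λ(s) ≤ C₂/T^s` (in particular the series converges). -/
theorem stmt11 (s : ℝ) (hs : 1 < s) :
    ∃ C₁ C₂ : ℝ, 0 < C₁ ∧ 0 < C₂ ∧
      ∀ Δ T : ℝ, 0 < Δ → Δ ≤ T → T ≤ 2 * Δ / Real.sqrt 3 →
        Summable (fun xy : {v : ℤ × ℤ // v ≠ 0} =>
          (T * ((xy : ℤ × ℤ).1 : ℝ) ^ 2 + T * ((xy : ℤ × ℤ).2 : ℝ) ^ 2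
            + 2 * ((xy : ℤ × ℤ).1 : ℝ) * ((xy : ℤ × ℤ).2 : ℝ)
              * Real.sqrt (T ^ 2 - Δ ^ 2)) ^ (-s)) ∧
        C₁ / T ^ s ≤
          (∑' xy : {v : ℤ × ℤ // v ≠ 0},
            (T * ((xy : ℤ × ℤ).1 : ℝ) ^ 2 + T * ((xy : ℤ × ℤ).2 : ℝ) ^ 2
              + 2 * ((xy : ℤ × ℤ).1 : ℝ) * ((xy : ℤ × ℤ).2 : ℝ)
                * Real.sqrt (T ^ 2 - Δ ^ 2)) ^ (-s)) ∧
        (∑' xy : {v : ℤ × ℤ // v ≠ 0},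
            (T * ((xy : ℤ × ℤ).1 : ℝ) ^ 2 + T * ((xy : ℤ × ℤ).2 : ℝ) ^ 2
              + 2 * ((xy : ℤ × ℤ).1 : ℝ) * ((xy : ℤ × ℤ).2 : ℝ)
                * Real.sqrt (T ^ 2 - Δ ^ 2)) ^ (-s)) ≤ C₂ / T ^ s := by
  obtain ⟨C₁, C₂, hC₁, hC₂, h⟩ := stmt11_general hs one_half_lt_one
  exact ⟨C₁, C₂, hC₁, hC₂, fun Δ T hΔ hΔT hTΔ =>
    h T _ (hΔ.trans_le hΔT) (abs_sqrt_sq_sub_sq_le_half (hΔ.le.trans hΔT) hTΔ)⟩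
end
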